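/- arXiv:2202.06392 — 3 statements merged into one kernel-verified Lean document; each statement's English description precedes it below -/
import Mathlib

section
/- For every r > 0 there exists a constant C = C(r) > 0, independent of f, n and d, with the following property. Let d ≥ 3 be an integer, δ > 0, and f ∈ C(S^d) be such that ‖f‖_{d;r} := sup_{x ∈ S^d} [ ‖f‖_∞ + min_{P ∈ Π_r^d} max_{y ∈ B(x,δ)} |f(y)−P(y)|/|x−y|_{d+1}^r ] < ∞. Let n be an integer with n ≥ 2(d+1), dn ≥ (d+r+1)², and √(16 r (log n)/n) ≤ δ. Then E_{d;2(d+2)n}(f) ≤ C · d^{1/6} · dim(Π_{2(d+2)n}^d)^{−r/d} · ‖f‖_{d;r}. -/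
noncomputable section

open MeasureTheory Real Set
open scoped RealInnerProductSpace

/-- Value at `x` of the orthonormalized Jacobi polynomial `p_n^{(α,β)}`. -/
def jacobiP (α β : ℝ) (n : ℕ) (x : ℝ) : ℝ :=
  Real.sqrt ((2 * (n : ℝ) + α + β + 1) / 2 ^ (α + β + 1) *
      (Real.Gamma ((n : ℝ) + α + β + 1) * (n.factorial : ℝ) /
        (Real.Gamma ((n : ℝ) + α + 1) * Real.Gamma ((n : ℝ) + β + 1)))) *
    (Real.Gamma (α + n + 1) / ((n.factorial : ℝ) * Real.Gamma (α + β + n + 1))) *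
    ∑ m ∈ Finset.range (n + 1),
      (n.choose m : ℝ) * (Real.Gamma (α + β + n + m + 1) / Real.Gamma (α + m + 1)) *
        ((x - 1) / 2) ^ m

/-- The kernel `K_n^{(α,β)}(x) = Σ_{ℓ<n} p_ℓ^{(α,β)}(1) p_ℓ^{(α,β)}(x)`. -/
def jacobiK (α β : ℝ) (n : ℕ) (x : ℝ) : ℝ :=
  ∑ ℓ ∈ Finset.range n, jacobiP α β ℓ 1 * jacobiP α β ℓ x

/-- The unit sphere `S^d ⊂ ℝ^{d+1}`. -/
abbrev Sph (d : ℕ) := Metric.sphere (0 : EuclideanSpace ℝ (Fin (d + 1))) 1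

/-- The rotation invariant Riemannian volume probability measure `μ_d^*` on `S^d`. -/
def sphMeasure (d : ℕ) : Measure (Sph d) :=
  ((volume : Measure (EuclideanSpace ℝ (Fin (d + 1)))).toSphere Set.univ)⁻¹ •
    (volume : Measure (EuclideanSpace ℝ (Fin (d + 1)))).toSphere

/-- `f : S^d → ℝ` is the restriction to the sphere of an algebraic polynomial in `d+1`
variables of total degree `< n`, i.e. `f ∈ Π_n^d`. -/
def IsSphPoly (d : ℕ) (n : ℝ) (f : Sph d → ℝ) : Prop :=
  ∃ p : MvPolynomial (Fin (d + 1)) ℝ, (p.totalDegree : ℝ) < n ∧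
    ∀ y : Sph d, f y = MvPolynomial.eval (fun i => (y : EuclideanSpace ℝ (Fin (d + 1))) i) p

/-- Integral of `f` with respect to a signed measure (via the Jordan decomposition). -/
def sInt {X : Type*} [MeasurableSpace X] (ν : SignedMeasure X) (f : X → ℝ) : ℝ :=
  (∫ x, f x ∂ν.toJordanDecomposition.posPart) - ∫ x, f x ∂ν.toJordanDecomposition.negPart

/-- Integral of `f` over a set `s` with respect to a signed measure. -/
def sIntOn {X : Type*} [MeasurableSpace X] (ν : SignedMeasure X) (s : Set X) (f : X → ℝ) : ℝ :=
  (∫ x in s, f x ∂ν.toJordanDecomposition.posPart) -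
    ∫ x in s, f x ∂ν.toJordanDecomposition.negPart

/-- `ν` is a quadrature measure of order `n` on `S^d`. -/
def IsQuadrature (d : ℕ) (n : ℝ) (ν : SignedMeasure (Sph d)) : Prop :=
  ∀ f : Sph d → ℝ, IsSphPoly d n f → sInt ν f = ∫ y, f y ∂sphMeasure d

/-- `ν` satisfies the Marcinkiewicz-Zygmund inequality of order `n` with constant `c`;
`ν ∈ MZ(d;n)` means this holds for some `c`, and `|||ν|||_{d;n}` is the least such `c`. -/
def IsMZ (d : ℕ) (n : ℝ) (ν : SignedMeasure (Sph d)) (c : ℝ) : Prop :=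
  ∀ f : Sph d → ℝ, IsSphPoly d (n / 2) f →
    (∫ y, (f y) ^ 2 ∂ν.totalVariation) ≤ c * ∫ y, (f y) ^ 2 ∂sphMeasure d

/-- `ω_d`, the volume of `S^d`. -/
def omegaS (d : ℕ) : ℝ := 2 * Real.pi ^ (((d : ℝ) + 1) / 2) / Real.Gamma (((d : ℝ) + 1) / 2)

/-- The reproducing kernel `K_{d;n}` of `Π_n^d`. -/
def sphK (d n : ℕ) (x : ℝ) : ℝ :=
  (omegaS d / omegaS (d - 1)) * jacobiK ((d : ℝ) / 2 - 1) ((d : ℝ) / 2 - 1) n x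

/-- The kernel `Φ̃_{d;n,r}`. -/
def PhiTilde (d n : ℕ) (r : ℝ) (x : ℝ) : ℝ :=
  sphK d ((d + 2) * n) x *
    (jacobiP ((d : ℝ) / 2 + r) ((d : ℝ) / 2 - 2) (d * n) x /
      jacobiP ((d : ℝ) / 2 + r) ((d : ℝ) / 2 - 2) (d * n) 1)

/-- The kernel `Φ_{d;n,r}`. -/
def Phi (d n : ℕ) (r : ℝ) (x : ℝ) : ℝ := PhiTilde d n r x * ((1 + x) / 2) ^ n

/-- The inner product `x·y` of two points of `S^d`. -/
def ip {d : ℕ} (x y : Sph d) : ℝ :=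
  ⟪(x : EuclideanSpace ℝ (Fin (d + 1))), (y : EuclideanSpace ℝ (Fin (d + 1)))⟫

/-- The operator `σ_{d;n,r}(ν, f)`. -/
def sigmaOp (d n : ℕ) (r : ℝ) (ν : SignedMeasure (Sph d)) (f : Sph d → ℝ) (x : Sph d) : ℝ :=
  sInt ν (fun y => f y * Phi d n r (ip x y))

/-- The operator `σ̃_{d;n,r}(ν, f)`. -/
def sigmaTildeOp (d n : ℕ) (r : ℝ) (ν : SignedMeasure (Sph d)) (f : Sph d → ℝ) (x : Sph d) : ℝ :=
  sInt ν (fun y => f y * PhiTilde d n r (ip x y))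

/-- The uniform (supremum) norm `‖f‖_∞`. -/
def supNorm {X : Type*} (f : X → ℝ) : ℝ := sSup (Set.range fun x => |f x|)

/-- `E_{d;n}(f)`, the degree of approximation of `f` from `Π_n^d` in the uniform norm. -/
def bestApprox (d : ℕ) (n : ℝ) (f : Sph d → ℝ) : ℝ :=
  sInf {t | ∃ g, IsSphPoly d n g ∧ ∀ y, |f y - g y| ≤ t}

/-- `dim Π_n^d = (2n+d−2)·Γ(n+d−1)/(Γ(n)·Γ(d+1))` (for `n ≥ 2`). -/
def dimPi (d n : ℕ) : ℝ :=
  (2 * (n : ℝ) + d - 2) * Real.Gamma ((n : ℝ) + d - 1) /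
    (Real.Gamma n * Real.Gamma ((d : ℝ) + 1))

/-!
The zonal kernel `Q * G` is a product of two Jacobi-type polynomials in the haversine distance
`s = |x - y|² / 4`, which has a Beta distribution on the sphere. `Q` reproduces the value at the
pole of polynomials of degree at most `d * n + k`. `G` equals `1` at the pole and is the polynomial
of its degree minimizing the mean of `s ^ (4 * k) * G ^ 2`, so that `(n * |x - y|) ^ (4 * k) * |G|`
has a mean square comparable with that of `Q`. Convolution with the normalized kernel therefore
fixes polynomials of degree `k = ⌈r⌉` at the pole, and its error at `x` is the convolution of
`f - P` for the local polynomial `P` at `x`. Near `x` one has `|f - P| ≤ L * |x - y| ^ r`, which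
costs `n ^ (-r)`. At distance `c / √n` and beyond, `|f - P|` is at most of order `n ^ k` by the
growth of polynomials off a cap, while the weight `(n * |x - y|) ^ (4 * k)` gains `n ^ (-2 * k)`.
No constant depends on `d`, because the degree of the kernel grows like `2 * d * n` and
`dim Π_{2(d+2)n} ^ (1 / d)` is bounded by a multiple of `n`.
-/

/-- The rising factorial `(a)_n = a (a + 1) ⋯ (a + n - 1)`. -/
def poch (a : ℝ) (n : ℕ) : ℝ := (ascPochhammer ℝ n).eval a

lemma poch_zero (a : ℝ) : poch a 0 = 1 := by simp [poch]

lemma poch_succ (a : ℝ) (n : ℕ) : poch a (n + 1) = poch a n * (a + n) :=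
  ascPochhammer_succ_eval n a

lemma poch_one (a : ℝ) : poch a 1 = a := by simp [poch]

lemma poch_add (a : ℝ) (m n : ℕ) : poch a (m + n) = poch a m * poch (a + m) n := by
  simp [poch, ← ascPochhammer_mul]

lemma poch_succ_left (a : ℝ) (n : ℕ) : poch a (n + 1) = a * poch (a + 1) n := by
  rw [add_comm, poch_add, poch_one, Nat.cast_one]

lemma poch_pos {a : ℝ} (ha : 0 < a) (n : ℕ) : 0 < poch a n := ascPochhammer_pos n a ha

lemma pow_le_poch {a : ℝ} (ha : 0 ≤ a) (n : ℕ) : a ^ n ≤ poch a n := by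
  induction n with
  | zero => simp [poch_zero]
  | succ n ih =>
    rw [pow_succ, poch_succ]
    exact mul_le_mul ih (by simp) ha ((pow_nonneg ha n).trans ih)

lemma poch_le_pow {a b : ℝ} (ha : 0 ≤ a) {n : ℕ} (h : a + n ≤ b + 1) : poch a n ≤ b ^ n := by
  induction n with
  | zero => simp [poch_zero]
  | succ n ih =>
    push_cast at h
    rw [pow_succ, poch_succ]
    have : 0 ≤ b := by linarith [n.cast_nonneg (α := ℝ)]
    gcongr
    · exact ih (by linarith)
    · linarith

lemma sum_alternating_choose_eq_fwdDiff_iter (f : ℝ → ℝ) (m : ℕ) (y : ℝ) :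
    ∑ i ∈ Finset.range (m + 1), (-1 : ℝ) ^ i * m.choose i * f (y + i)
      = (-1) ^ m * (fwdDiff 1)^[m] f y := by
  rw [fwdDiff_iter_eq_sum_shift, Finset.mul_sum]
  refine Finset.sum_congr rfl fun i hi => ?_
  obtain ⟨j, rfl⟩ := Nat.exists_eq_add_of_le (Finset.mem_range_succ_iff.1 hi)
  have hj : (-1 : ℝ) ^ j * (-1) ^ j = 1 := by rw [← mul_pow]; simp
  simp only [zsmul_eq_mul, nsmul_eq_mul, mul_one, Nat.add_sub_cancel_left, pow_add]
  push_cast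
  linear_combination (-(-1 : ℝ) ^ i * (i + j).choose i * f (y + i)) * hj

lemma fwdDiff_iter_inv (m : ℕ) {x : ℝ} (hx : 0 < x) :
    (fwdDiff 1)^[m] (fun y : ℝ => y⁻¹) x = (-1) ^ m * m.factorial / poch x (m + 1) := by
  induction m generalizing x with
  | zero => simp [poch_one]
  | succ m ih =>
    rw [Function.iterate_succ_apply', fwdDiff, ih hx, ih (by positivity), poch_succ x (m + 1),
      poch_succ_left x m, poch_succ (x + 1) m, Nat.factorial_succ]
    have := poch_pos (show 0 < x + 1 by positivity) m
    push_cast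
    field_simp
    ring

/-- Partial fractions of `q / (X (X + 1) ⋯ (X + m))`, evaluated at `x`. -/
lemma sum_alternating_choose_mul_eval_div (m : ℕ) {q : Polynomial ℝ} (hq : q.natDegree ≤ m)
    {x : ℝ} (hx : 0 < x) :
    ∑ i ∈ Finset.range (m + 1), (-1 : ℝ) ^ i * m.choose i * (q.eval (i : ℝ) / (x + i))
      = q.eval (-x) * (m.factorial / poch x (m + 1)) := by
  set p := q /ₘ (Polynomial.X - Polynomial.C (-x)) with hp
  have hqp (y : ℝ) : q.eval y = q.eval (-x) + (y + x) * p.eval y := by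
    conv_lhs => rw [← Polynomial.modByMonic_add_div q (Polynomial.X - Polynomial.C (-x)),
      Polynomial.modByMonic_X_sub_C_eq_C_eval]
    simp [hp]
  have hp_diff : (fwdDiff 1)^[m] (fun y : ℝ => p.eval y) 0 = 0 := by
    rcases m.eq_zero_or_pos with rfl | hm
    · have : p = 0 := by
        rw [hp, Polynomial.divByMonic_eq_zero_iff (Polynomial.monic_X_sub_C _),
          Polynomial.degree_X_sub_C]
        exact (Polynomial.natDegree_eq_zero_iff_degree_le_zero.1 (by omega)).trans_lt one_pos
      simp [this]
    · refine congrFun (Polynomial.fwdDiff_iter_eq_zero_of_degree_lt (P := p) ?_) 0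
      rw [hp, Polynomial.natDegree_divByMonic _ (Polynomial.monic_X_sub_C _),
        Polynomial.natDegree_X_sub_C]
      omega
  have hsum := congrArg₂ (fun a b => q.eval (-x) * a + b)
    (sum_alternating_choose_eq_fwdDiff_iter (fun y => y⁻¹) m x)
    (sum_alternating_choose_eq_fwdDiff_iter (fun y => p.eval y) m 0)
  simp only [fwdDiff_iter_inv m hx, hp_diff, Finset.mul_sum, ← Finset.sum_add_distrib] at hsum
  have hsign : (-1 : ℝ) ^ m * (-1) ^ m = 1 := by rw [← mul_pow]; simp
  convert hsum using 1
  · refine Finset.sum_congr rfl fun i _ => ?_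
    rw [hqp]
    field_simp
    ring_nf
  · linear_combination (-q.eval (-x) * m.factorial / poch x (m + 1)) * hsign

/-- `Λ` is the expectation of polynomials under a Beta`(A, B)` distribution, described by its
moments. -/
def HasBetaMoments (A B : ℝ) (Λ : Polynomial ℝ →ₗ[ℝ] ℝ) : Prop :=
  ∀ k, Λ (Polynomial.X ^ k) = poch A k / poch (A + B) k

/-- The Jacobi polynomial `₂F₁(-m, m + A + B + R; A + R + 1; s)`, normalized to be `1` at `0`;
`kernelPoly A B m R * X ^ R` reproduces values at `0` of polynomials of degree at most `m` under
Beta`(A, B)` expectations, up to the factor `christoffel A B m R`. -/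
def kernelPoly (A B : ℝ) (m R : ℕ) : Polynomial ℝ :=
  ∑ i ∈ Finset.range (m + 1), Polynomial.C
    ((-1) ^ i * m.choose i * (poch (m + A + B + R) i / poch (A + R + 1) i)) * Polynomial.X ^ i

/-- The Beta`(A, B)` expectation of `kernelPoly A B m R * X ^ R`. For `R = 0` it is the Christoffel
function at `0`, the least expectation of `p ^ 2` when `p` has degree at most `m` and
`p(0) = 1`. -/
def christoffel (A B : ℝ) (m R : ℕ) : ℝ :=
  poch A (R + 1) / poch (A + B) (m + R) * (poch B m * (m.factorial / poch (A + R) (m + 1)))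

section ReproducingKernel

variable {A B : ℝ}

lemma natDegree_kernelPoly_le (A B : ℝ) (m R : ℕ) : (kernelPoly A B m R).natDegree ≤ m :=
  Polynomial.natDegree_sum_le_of_forall_le _ _ fun _ hi =>
    (Polynomial.natDegree_C_mul_X_pow_le _ _).trans (Finset.mem_range_succ_iff.1 hi)

lemma kernelPoly_eval_zero (A B : ℝ) (m R : ℕ) : (kernelPoly A B m R).eval 0 = 1 := by
  rw [kernelPoly, Polynomial.eval_finsetSum, Finset.sum_range_succ']
  simp [poch_zero]

lemma kernelPoly_coeff_mul_beta_moment (hA : 0 < A) (hB : 0 < B) {m j : ℕ} (R i : ℕ) (hj : j ≤ m) :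
    (-1) ^ i * m.choose i * (poch (m + A + B + R) i / poch (A + R + 1) i) *
        (poch A (i + (R + j)) / poch (A + B) (i + (R + j)))
      = poch A (R + 1) / poch (A + B) (m + R) * ((-1) ^ i * m.choose i *
          (poch (A + R + i) j * poch (A + B + R + j + i) (m - j) / (A + R + i))) := by
  have hA_split : poch A (i + (R + j)) * (A + R + i)
      = poch A (R + 1) * poch (A + R + 1) i * poch (A + R + i) j := by
    have h₁ := poch_add A (R + i) j
    have h₂ := poch_add A (R + 1) i
    rw [show R + 1 + i = R + i + 1 by ring, poch_succ] at h₂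
    push_cast [← add_assoc] at h₁ h₂
    rw [show i + (R + j) = R + i + j by ring, h₁, ← h₂]
    ring
  have hAB_split : poch (A + B) (m + R) * poch (m + A + B + R) i
      = poch (A + B) (i + (R + j)) * poch (A + B + R + j + i) (m - j) := by
    have h₁ := poch_add (A + B) (m + R) i
    have h₂ := poch_add (A + B) (i + (R + j)) (m - j)
    rw [show i + (R + j) + (m - j) = m + R + i by omega, h₁] at h₂
    convert h₂ using 3 <;> push_cast <;> ring
  have h₁ := poch_pos (show 0 < A + R + 1 by positivity) i
  have h₂ := poch_pos (show 0 < A + B by positivity) (m + R)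
  have h₃ := poch_pos (show 0 < A + B by positivity) (i + (R + j))
  field_simp
  linear_combination (m.choose i : ℝ) * (poch (A + B) (m + R) * poch (m + A + B + R) i * hA_split +
    poch A (R + 1) * poch (A + R + 1) i * poch (A + R + i) j * hAB_split)

variable {Λ : Polynomial ℝ →ₗ[ℝ] ℝ}

lemma HasBetaMoments.map_kernelPoly_mul_X_pow (hΛ : HasBetaMoments A B Λ) (hA : 0 < A) (hB : 0 < B)
    {m j : ℕ} (R : ℕ) (hj : j ≤ m) :
    Λ (kernelPoly A B m R * Polynomial.X ^ (R + j)) = if j = 0 then christoffel A B m R else 0 := by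
  set q : Polynomial ℝ := (ascPochhammer ℝ j).comp (Polynomial.X + Polynomial.C (A + R)) *
    (ascPochhammer ℝ (m - j)).comp (Polynomial.X + Polynomial.C (A + B + R + j)) with hq
  have hq_degree : q.natDegree ≤ m := by
    refine Polynomial.natDegree_mul_le.trans_eq ?_
    simp only [Polynomial.natDegree_comp, ascPochhammer_natDegree, Polynomial.natDegree_X_add_C]
    omega
  have hq_eval (x : ℝ) : q.eval x = poch (A + R + x) j * poch (A + B + R + j + x) (m - j) := by
    simp [hq, poch, add_comm]
  have hq_node : q.eval (-(A + R)) = if j = 0 then poch B m else 0 := by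
    rw [hq_eval, add_neg_cancel]
    split_ifs with h
    · rw [h, poch_zero, one_mul]
      congr 1
      push_cast
      ring
    · simp [poch, h]
  calc Λ (kernelPoly A B m R * Polynomial.X ^ (R + j))
      = ∑ i ∈ Finset.range (m + 1), (-1) ^ i * m.choose i *
          (poch (m + A + B + R) i / poch (A + R + 1) i) *
            (poch A (i + (R + j)) / poch (A + B) (i + (R + j))) := by
        rw [kernelPoly, Finset.sum_mul, map_sum]
        refine Finset.sum_congr rfl fun i _ => ?_
        rw [mul_assoc, ← pow_add, ← Polynomial.smul_eq_C_mul, map_smul, hΛ, smul_eq_mul]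
    _ = poch A (R + 1) / poch (A + B) (m + R) *
          (q.eval (-(A + R)) * (m.factorial / poch (A + R) (m + 1))) := by
        rw [← sum_alternating_choose_mul_eval_div m hq_degree (by positivity), Finset.mul_sum]
        refine Finset.sum_congr rfl fun i _ => ?_
        rw [kernelPoly_coeff_mul_beta_moment hA hB R i hj, hq_eval]
    _ = _ := by
        rw [hq_node]
        split_ifs <;> simp [christoffel]

theorem HasBetaMoments.map_kernelPoly_mul (hΛ : HasBetaMoments A B Λ) (hA : 0 < A) (hB : 0 < B)
    {m : ℕ} (R : ℕ) {p : Polynomial ℝ} (hp : p.natDegree ≤ m) :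
    Λ (kernelPoly A B m R * Polynomial.X ^ R * p) = p.eval 0 * christoffel A B m R := by
  have hterm (j : ℕ) (hj : j ∈ Finset.range (m + 1)) :
      Λ (kernelPoly A B m R * Polynomial.X ^ R * Polynomial.monomial j (p.coeff j))
        = p.coeff j * if j = 0 then christoffel A B m R else 0 := by
    rw [← hΛ.map_kernelPoly_mul_X_pow hA hB R (Finset.mem_range_succ_iff.1 hj),
      ← smul_eq_mul (p.coeff j), ← map_smul, ← Polynomial.C_mul_X_pow_eq_monomial,
      Polynomial.smul_eq_C_mul, pow_add]
    congr 1
    ring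
  conv_lhs => rw [p.as_sum_range' (m + 1) (by omega)]
  rw [Finset.mul_sum, map_sum, Finset.sum_congr rfl hterm]
  simp [Polynomial.coeff_zero_eq_eval_zero]

end ReproducingKernel

section Estimates

variable {A B : ℝ}

lemma christoffel_pos (hA : 0 < A) (hB : 0 < B) (m R : ℕ) : 0 < christoffel A B m R := by
  have h₁ := poch_pos hA (R + 1)
  have h₂ := poch_pos (add_pos hA hB) (m + R)
  have h₃ := poch_pos hB m
  have h₄ := poch_pos (show 0 < A + R by positivity) (m + 1)
  unfold christoffel
  positivity

lemma christoffel_zero_eq (hA : 0 < A) (m : ℕ) :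
    christoffel A B m 0 = poch B m * m.factorial / (poch (A + B) m * poch (A + 1) m) := by
  have := poch_pos (show 0 < A + 1 by positivity) m
  rw [christoffel, Nat.cast_zero, add_zero, add_zero, zero_add, poch_one, poch_succ_left]
  field_simp

lemma christoffel_le_pow_mul_christoffel_zero (hA : 0 < A) (hB : 0 < B) {m : ℕ} (hm : 0 < m)
    (R : ℕ) : christoffel A B m R ≤ ((A + R) / m) ^ (2 * R) * christoffel A B m 0 := by
  have hm' : (0 : ℝ) < m := Nat.cast_pos.2 hm
  have hAR := poch_pos hA R
  have hAm := poch_pos hA (m + 1)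
  have hABR := poch_pos (show 0 < A + B + m by positivity) R
  have hAmR := poch_pos (show 0 < A + (m + 1 : ℕ) by positivity) R
  have hratio : christoffel A B m R = (poch (A + 1) R / poch (A + B + m) R) *
      (poch A R / poch (A + (m + 1 : ℕ)) R) * christoffel A B m 0 := by
    have hswap : poch (A + R) (m + 1) = poch A (m + 1) * poch (A + (m + 1 : ℕ)) R / poch A R := by
      rw [← poch_add A (m + 1), add_comm (m + 1) R, poch_add A R, mul_div_cancel_left₀ _ hAR.ne']
    have hABm := poch_pos (add_pos hA hB) m
    simp only [christoffel, hswap, poch_succ_left A R, poch_add (A + B) m R, zero_add, add_zero,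
      Nat.cast_zero, poch_one]
    field_simp
  rw [hratio, two_mul R, pow_add, div_pow]
  have h₁ : poch (A + 1) R ≤ (A + R) ^ R := poch_le_pow (by linarith) (by linarith)
  have h₂ : poch A R ≤ (A + R) ^ R := poch_le_pow hA.le (by linarith)
  have h₃ : (m : ℝ) ^ R ≤ poch (A + B + m) R :=
    (pow_le_pow_left₀ hm'.le (by linarith) R).trans (pow_le_poch (by positivity) R)
  have h₄ : (m : ℝ) ^ R ≤ poch (A + (m + 1 : ℕ)) R :=
    (pow_le_pow_left₀ hm'.le (by push_cast; linarith) R).trans (pow_le_poch (by positivity) R)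
  have := (christoffel_pos hA hB m 0).le
  gcongr

lemma christoffel_zero_le_four_mul_succ (hA : 0 < A) (hB : 0 < B) {m : ℕ} (hm : A ≤ m) :
    christoffel A B m 0 ≤ 4 * christoffel A B (m + 1) 0 := by
  have h₁ := poch_pos hB m
  have h₂ := poch_pos (add_pos hA hB) m
  have h₃ := poch_pos (show 0 < A + 1 by positivity) m
  rw [christoffel_zero_eq hA, christoffel_zero_eq hA, poch_succ, poch_succ, poch_succ,
    Nat.factorial_succ, ← mul_div_assoc, div_le_div_iff₀ (by positivity) (by positivity)]
  have hstep : (A + B + m) * (A + 1 + m) ≤ 4 * ((B + m) * (m + 1)) := by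
    nlinarith [m.cast_nonneg (α := ℝ)]
  push_cast
  calc poch B m * m.factorial * (poch (A + B) m * (A + B + m) * (poch (A + 1) m * (A + 1 + m)))
      = poch B m * m.factorial * poch (A + B) m * poch (A + 1) m *
          ((A + B + m) * (A + 1 + m)) := by ring
    _ ≤ poch B m * m.factorial * poch (A + B) m * poch (A + 1) m *
          (4 * ((B + m) * (m + 1))) := by gcongr
    _ = _ := by ring

lemma christoffel_zero_le_four_pow_mul_add (hA : 0 < A) (hB : 0 < B) {m : ℕ} (hm : A ≤ m)
    (k : ℕ) : christoffel A B m 0 ≤ 4 ^ k * christoffel A B (m + k) 0 := by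
  induction k with
  | zero => simp
  | succ k ih =>
    have hmk : A ≤ (m + k : ℕ) := hm.trans (by simp)
    rw [pow_succ, mul_assoc]
    exact ih.trans (by gcongr; exact christoffel_zero_le_four_mul_succ hA hB hmk)

lemma abs_eval_kernelPoly_le (hA : 0 < A) (hB : 0 < B) (m R : ℕ) {s : ℝ} (hs : 0 ≤ s) :
    |(kernelPoly A B m R).eval s| ≤ exp (m * (2 * m + A + B + R) * s / (A + R + 1)) := by
  rw [kernelPoly, Polynomial.eval_finsetSum]
  refine (Finset.abs_sum_le_sum_abs _ _).trans
    (le_trans (Finset.sum_le_sum fun i hi => ?_) (sum_le_exp_of_nonneg (by positivity) (m + 1)))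
  have hi : (i : ℝ) ≤ m := Nat.cast_le.2 (Finset.mem_range_succ_iff.1 hi)
  have h₁ := poch_pos (show 0 < A + R + 1 by positivity) i
  have h₂ := poch_pos (show 0 < m + A + B + R by positivity) i
  have hnum : poch (m + A + B + R) i ≤ (2 * m + A + B + R) ^ i :=
    poch_le_pow (by positivity) (by linarith)
  have hden : (A + R + 1) ^ i ≤ poch (A + R + 1) i := pow_le_poch (by positivity) i
  rw [Polynomial.eval_mul, Polynomial.eval_C, Polynomial.eval_pow, Polynomial.eval_X, abs_mul,
    abs_mul, abs_mul, abs_pow, abs_neg, abs_one, one_pow, one_mul, Nat.abs_cast,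
    abs_of_pos (div_pos h₂ h₁), abs_of_nonneg (pow_nonneg hs i)]
  calc m.choose i * (poch (m + A + B + R) i / poch (A + R + 1) i) * s ^ i
      ≤ (m ^ i / i.factorial) * ((2 * m + A + B + R) ^ i / (A + R + 1) ^ i) * s ^ i := by
        gcongr
        exact Nat.choose_le_pow_div i m
    _ = _ := by
        rw [div_pow, mul_pow, mul_pow]
        field_simp

lemma poch_div_poch_le (hA : 0 < A) (hB : 0 < B) (J : ℕ) :
    poch A J / poch (A + B) J ≤ ((A + B) / (A + B + J)) ^ B := by
  induction J with
  | zero => simp [poch_zero, (add_pos hA hB).ne']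
  | succ J ih =>
    set S := A + B + J with hS
    have hS_pos : 0 < S := by positivity
    have hstep : (A + J) / S ≤ (S / (S + 1)) ^ B := by
      calc (A + J) / S = -(B / S) + 1 := by rw [hS]; field_simp; ring
        _ ≤ exp (-(B / S)) := add_one_le_exp _
        _ = (exp (1 / S))⁻¹ ^ B := by rw [← exp_neg, ← exp_mul]; ring_nf
        _ ≤ (1 / S + 1)⁻¹ ^ B := by gcongr; exact add_one_le_exp _
        _ = (S / (S + 1)) ^ B := by congr 1; field_simp; ring
    have : 0 < poch A J := poch_pos hA J
    have : 0 < poch (A + B) J := poch_pos (add_pos hA hB) J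
    calc poch A (J + 1) / poch (A + B) (J + 1)
        = poch A J / poch (A + B) J * ((A + J) / S) := by
          rw [poch_succ, poch_succ, mul_div_mul_comm]
      _ ≤ ((A + B) / S) ^ B * (S / (S + 1)) ^ B := by gcongr
      _ = ((A + B) / (A + B + (J + 1 : ℕ))) ^ B := by
        rw [← mul_rpow (by positivity) (by positivity)]
        congr 1
        push_cast [hS]
        field_simp
        ring

lemma choose_le_exp_mul_div_pow (N d : ℕ) : (N.choose d : ℝ) ≤ (exp 1 * N / d) ^ d := by
  rcases d.eq_zero_or_pos with rfl | hd
  · simp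
  have : (0 : ℝ) < d := Nat.cast_pos.2 hd
  have hfact : ((d.factorial : ℝ))⁻¹ ≤ exp 1 ^ d / d ^ d := by
    rw [le_div_iff₀ (by positivity), ← exp_nat_mul, mul_one, mul_comm, ← div_eq_mul_inv]
    exact pow_div_factorial_le_exp d d.cast_nonneg d
  calc (N.choose d : ℝ) ≤ N ^ d / d.factorial := Nat.choose_le_pow_div d N
    _ ≤ N ^ d * (exp 1 ^ d / d ^ d) := by rw [div_eq_mul_inv]; gcongr
    _ = _ := by rw [div_pow, mul_pow]; ring

lemma poch_natCast_add_one_eq (d M : ℕ) :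
    poch (d + 1) M = M.factorial * ((d + M).choose M : ℝ) := by
  rw [poch, ← Nat.cast_add_one, ascPochhammer_nat_eq_natCast_ascFactorial,
    Nat.ascFactorial_eq_factorial_mul_choose, Nat.cast_mul]

lemma inv_christoffel_half_eq {d : ℕ} (hd : 0 < d) (M : ℕ) :
    (christoffel (d / 2) (d / 2) M 0)⁻¹ = (d + 2 * M) / (d + M) * ((d + M).choose M : ℝ) := by
  have : (0 : ℝ) < d := Nat.cast_pos.2 hd
  have h₁ := poch_pos (show (0 : ℝ) < d / 2 by positivity) M
  have : 0 < poch (d + 1) M := poch_pos (by positivity) M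
  have hhalf : (d / 2 : ℝ) * poch (d / 2 + 1) M = poch (d / 2) M * (d / 2 + M) := by
    rw [← poch_succ_left, poch_succ]
  have hfull : (d : ℝ) * poch (d + 1) M = poch d M * (d + M) := by
    rw [← poch_succ_left, poch_succ]
  have hchoose := poch_natCast_add_one_eq d M
  rw [christoffel_zero_eq (by positivity), inv_div, add_halves]
  have e₁ : poch ((d : ℝ) / 2 + 1) M = poch (d / 2) M * (d + 2 * M) / d := by
    field_simp at hhalf ⊢
    linarith
  have e₂ : poch (d : ℝ) M = d * (M.factorial * ((d + M).choose M : ℝ)) / (d + M) := by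
    rw [← hchoose, hfull]
    field_simp
  rw [e₁, e₂]
  field_simp

lemma one_le_pow_mul_christoffel_half {d n M : ℕ} (hd : 0 < d) (hn : 0 < n) (hM : M ≤ 2 * d * n) :
    1 ≤ (18 * n : ℝ) ^ d * christoffel (d / 2) (d / 2) M 0 := by
  have hd' : (0 : ℝ) < d := Nat.cast_pos.2 hd
  have hn' : (1 : ℝ) ≤ n := Nat.one_le_cast.2 hn
  have hM' : (M : ℝ) ≤ 2 * d * n := by exact_mod_cast hM
  have hpos := christoffel_pos (half_pos hd') (half_pos hd') M 0
  rw [← div_le_iff₀ hpos, one_div, inv_christoffel_half_eq hd, ← Nat.choose_symm_add]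
  calc ((d : ℝ) + 2 * M) / (d + M) * ((d + M).choose d : ℝ)
      ≤ 2 * (exp 1 * (d + M : ℕ) / d) ^ d := by
        gcongr
        · rw [div_le_iff₀ (by positivity)]; linarith
        · exact choose_le_exp_mul_div_pow _ _
    _ ≤ 2 ^ d * (3 * (3 * n)) ^ d := by
        gcongr
        · exact le_self_pow₀ one_le_two hd.ne'
        · rw [mul_div_assoc]
          gcongr
          · exact exp_one_lt_three.le
          · rw [div_le_iff₀ hd']
            push_cast
            nlinarith
    _ = _ := by rw [← mul_pow]; ring_nf

end Estimates

section GaussianMoments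

lemma integral_homogeneous_mul_comp_norm {E : Type*} [NormedAddCommGroup E] [NormedSpace ℝ E]
    [FiniteDimensional ℝ E] [Nontrivial E] [MeasurableSpace E] [BorelSpace E] (μ : Measure E)
    [μ.IsAddHaarMeasure] {f : E → ℝ} {m : ℕ}
    (hf : ∀ (c : ℝ) (x : E), f (c • x) = c ^ m * f x) (g : ℝ → ℝ) :
    ∫ x, f x * g ‖x‖ ∂μ = (∫ ω : Metric.sphere (0 : E) 1, f ω ∂μ.toSphere) *
      ∫ ρ in Ioi (0 : ℝ), ρ ^ (m + (Module.finrank ℝ E - 1)) * g ρ := by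
  have hpolar : ∫ x, f x * g ‖x‖ ∂μ = ∫ p : Metric.sphere (0 : E) 1 × Ioi (0 : ℝ),
      f p.1 * (p.2.1 ^ m * g p.2) ∂μ.toSphere.prod (.volumeIoiPow (Module.finrank ℝ E - 1)) := by
    have hμ := μ.measurePreserving_homeomorphUnitSphereProd.integral_comp
      (Homeomorph.measurableEmbedding _) fun p : Metric.sphere (0 : E) 1 × Ioi (0 : ℝ) =>
        f p.1 * (p.2.1 ^ m * g p.2)
    have hpunctured := integral_subtype_comap (μ := μ) (measurableSet_singleton (0 : E)).compl
      fun x => f x * g ‖x‖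
    rw [restrict_compl_singleton] at hpunctured
    rw [← hμ, ← hpunctured]
    refine integral_congr_ae (.of_forall fun x => ?_)
    have hx : ‖x.1‖ ≠ 0 := norm_ne_zero_iff.2 x.2
    simp only [homeomorphUnitSphereProd_apply_fst_coe, homeomorphUnitSphereProd_apply_snd_coe, hf]
    rw [mul_mul_mul_comm, ← mul_pow, inv_mul_cancel₀ hx, one_pow, one_mul]
  rw [hpolar, integral_prod_mul (fun ω : Metric.sphere (0 : E) 1 => f ω)
    (fun ρ : Ioi (0 : ℝ) => ρ.1 ^ m * g ρ)]
  simp only [Measure.volumeIoiPow, ENNReal.ofReal]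
  rw [integral_withDensity_eq_integral_smul (measurable_subtype_coe.pow_const _).real_toNNReal,
    integral_subtype_comap measurableSet_Ioi fun ρ =>
      Real.toNNReal (ρ ^ (Module.finrank ℝ E - 1)) • (ρ ^ m * g ρ)]
  congr 1
  refine setIntegral_congr_fun measurableSet_Ioi fun ρ hρ => ?_
  simp only [NNReal.smul_def, Real.coe_toNNReal _ (pow_nonneg (mem_Ioi.1 hρ).le _), smul_eq_mul]
  ring

/-- The moment `∫₀^∞ ρⁿ exp(-ρ²) dρ`, the radial part of a Gaussian integral. -/
def radialMoment (n : ℕ) : ℝ := ∫ ρ in Ioi (0 : ℝ), ρ ^ n * exp (-ρ ^ 2)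

/-- The unnormalized Gaussian moment `∫ vⁿ exp(-v²) dv` over the line. -/
def gaussMoment (n : ℕ) : ℝ := ∫ v : ℝ, v ^ n * exp (-v ^ 2)

lemma radialMoment_eq_Gamma (n : ℕ) : radialMoment n = 1 / 2 * Gamma ((n + 1) / 2) := by
  rw [← integral_rpow_mul_exp_neg_rpow (p := 2) two_pos
    (neg_one_lt_zero.trans_le n.cast_nonneg), radialMoment]
  simp only [rpow_natCast, rpow_two]

lemma radialMoment_pos (n : ℕ) : 0 < radialMoment n := by
  rw [radialMoment_eq_Gamma]
  exact mul_pos one_half_pos (Gamma_pos_of_pos (by positivity))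

lemma radialMoment_add_two (n : ℕ) : radialMoment (n + 2) = (n + 1) / 2 * radialMoment n := by
  have hΓ := Gamma_add_one (show ((n : ℝ) + 1) / 2 ≠ 0 by positivity)
  rw [radialMoment_eq_Gamma, radialMoment_eq_Gamma,
    show (((n + 2 : ℕ) : ℝ) + 1) / 2 = (n + 1) / 2 + 1 by push_cast; ring, hΓ]
  ring

lemma gaussMoment_of_odd {n : ℕ} (hn : Odd n) : gaussMoment n = 0 := by
  have h := integral_neg_eq_self (fun v : ℝ => v ^ n * exp (-v ^ 2)) volume
  simp only [hn.neg_pow, even_two.neg_pow, neg_mul, integral_neg] at h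
  unfold gaussMoment
  linarith

lemma gaussMoment_of_even {n : ℕ} (hn : Even n) : gaussMoment n = 2 * radialMoment n := by
  have h := integral_comp_abs (f := fun v : ℝ => v ^ n * exp (-v ^ 2))
  simp only [hn.pow_abs, sq_abs] at h
  exact h

lemma gaussMoment_add_two (n : ℕ) : gaussMoment (n + 2) = (n + 1) / 2 * gaussMoment n := by
  rcases n.even_or_odd with hn | hn
  · rw [gaussMoment_of_even hn, gaussMoment_of_even (hn.add even_two), radialMoment_add_two]
    ring
  · rw [gaussMoment_of_odd hn, gaussMoment_of_odd (hn.add_even even_two), mul_zero]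

lemma gaussMoment_zero_pos : 0 < gaussMoment 0 := by
  rw [gaussMoment_of_even Even.zero]
  exact mul_pos two_pos (radialMoment_pos 0)

lemma integral_monomial_mul_exp_neg_norm_sq {ι : Type*} [Fintype ι] (γ : ι →₀ ℕ) :
    ∫ x : EuclideanSpace ℝ ι, MvPolynomial.eval x.ofLp (MvPolynomial.monomial γ 1) *
      exp (-‖x‖ ^ 2) = ∏ i, gaussMoment (γ i) := by
  have hprod (x : ι → ℝ) : MvPolynomial.eval x (MvPolynomial.monomial γ 1) *
      exp (-‖(WithLp.toLp 2 x : EuclideanSpace ℝ ι)‖ ^ 2)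
        = ∏ i, (x i ^ γ i * exp (-x i ^ 2)) := by
    rw [Finset.prod_mul_distrib, ← exp_sum, EuclideanSpace.norm_sq_eq, MvPolynomial.eval_monomial,
      one_mul, Finsupp.prod_fintype _ _ (by simp)]
    simp [Finset.sum_neg_distrib]
  rw [← (EuclideanSpace.volume_preserving_symm_measurableEquiv_toLp ι).symm.integral_comp
    (MeasurableEquiv.measurableEmbedding _)]
  simp only [MeasurableEquiv.symm_symm, MeasurableEquiv.coe_toLp, hprod]
  exact integral_fintype_prod_volume_eq_prod fun i (v : ℝ) => v ^ γ i * exp (-v ^ 2)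

end GaussianMoments

section SphericalMeans

variable {d : ℕ}

instance isProbabilityMeasure_sphMeasure (d : ℕ) : IsProbabilityMeasure (sphMeasure d) where
  measure_univ := by
    rw [sphMeasure, Measure.smul_apply, smul_eq_mul]
    exact ENNReal.inv_mul_cancel (Measure.measure_univ_ne_zero.2 (Measure.toSphere_ne_zero _))
      (measure_ne_top _ _)

lemma integrable_of_continuous_sph {f : Sph d → ℝ} (hf : Continuous f) :
    Integrable f (sphMeasure d) :=
  hf.integrable_of_hasCompactSupport (HasCompactSupport.of_compactSpace f)

lemma continuous_eval_sph (P : MvPolynomial (Fin (d + 1)) ℝ) :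
    Continuous fun y : Sph d => MvPolynomial.eval y.1.ofLp P :=
  (MvPolynomial.continuous_eval P).comp ((PiLp.continuous_ofLp 2 _).comp continuous_subtype_val)

/-- The surface area of `S^d`, before normalization to `sphMeasure d`. -/
def sphArea (d : ℕ) : ℝ :=
  (volume : Measure (EuclideanSpace ℝ (Fin (d + 1)))).toSphere.real univ

/-- The functional `P ↦ ∫ P dμ_d^*` on polynomials in `d + 1` variables. -/
def sphMean (d : ℕ) : MvPolynomial (Fin (d + 1)) ℝ →ₗ[ℝ] ℝ where
  toFun P := ∫ y : Sph d, MvPolynomial.eval y.1.ofLp P ∂sphMeasure d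
  map_add' P Q := by
    simp only [map_add]
    exact integral_add (integrable_of_continuous_sph (continuous_eval_sph P))
      (integrable_of_continuous_sph (continuous_eval_sph Q))
  map_smul' c P := by
    simp only [MvPolynomial.smul_eval, integral_const_mul, RingHom.id_apply, smul_eq_mul]

lemma sphMean_apply (P : MvPolynomial (Fin (d + 1)) ℝ) :
    sphMean d P = ∫ y : Sph d, MvPolynomial.eval y.1.ofLp P ∂sphMeasure d := rfl

lemma integral_sphMeasure_eq_div (f : Sph d → ℝ) :
    ∫ y, f y ∂sphMeasure d
      = (∫ y, f y ∂(volume : Measure (EuclideanSpace ℝ (Fin (d + 1)))).toSphere) / sphArea d := by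
  rw [sphMeasure, integral_smul_measure, ENNReal.toReal_inv, smul_eq_mul, inv_mul_eq_div, sphArea,
    Measure.real]

lemma eval_monomial_one_smul {ι : Type*} (γ : ι →₀ ℕ) (c : ℝ) (x : ι → ℝ) :
    MvPolynomial.eval (c • x) (MvPolynomial.monomial γ 1)
      = c ^ γ.degree * MvPolynomial.eval x (MvPolynomial.monomial γ 1) := by
  simp only [MvPolynomial.eval_monomial, one_mul, Finsupp.prod, Pi.smul_apply, smul_eq_mul, mul_pow,
    Finset.prod_mul_distrib, Finset.prod_pow_eq_pow_sum, Finsupp.degree_apply]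

lemma sphMean_monomial_mul_radialMoment (γ : Fin (d + 1) →₀ ℕ) :
    sphMean d (MvPolynomial.monomial γ 1) * radialMoment (γ.degree + d)
      = (∏ i, gaussMoment (γ i)) / sphArea d := by
  have hpolar := integral_homogeneous_mul_comp_norm
    (volume : Measure (EuclideanSpace ℝ (Fin (d + 1))))
    (f := fun x => MvPolynomial.eval x.ofLp (MvPolynomial.monomial γ 1))
    (fun c x => eval_monomial_one_smul γ c x.ofLp) fun ρ => exp (-ρ ^ 2)
  rw [integral_monomial_mul_exp_neg_norm_sq, finrank_euclideanSpace_fin, Nat.add_sub_cancel]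
    at hpolar
  rw [hpolar, mul_div_right_comm, sphMean_apply, integral_sphMeasure_eq_div, radialMoment]

/-- The functional `g ↦ ∫ g(y₀) dμ_d^*(y)`: the expectation of `g` under the distribution of one
coordinate on the sphere. -/
def axialMean (d : ℕ) : Polynomial ℝ →ₗ[ℝ] ℝ :=
  sphMean d ∘ₗ (Polynomial.aeval (MvPolynomial.X 0)).toLinearMap

lemma axialMean_apply (g : Polynomial ℝ) :
    axialMean d g = sphMean d (Polynomial.aeval (MvPolynomial.X 0) g) := rfl

lemma axialMean_X_pow_mul_one_sub_sq_pow (k J : ℕ) :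
    axialMean d (Polynomial.X ^ k * (1 - Polynomial.X ^ 2) ^ J) * radialMoment (2 * J + k + d)
      = gaussMoment k * gaussMoment 0 ^ d * poch (d / 2) J / sphArea d := by
  induction J generalizing k with
  | zero =>
    have h := sphMean_monomial_mul_radialMoment (d := d) (Finsupp.single 0 k)
    rw [Finsupp.degree_single, Fin.prod_univ_succ] at h
    simpa [axialMean_apply, ← MvPolynomial.X_pow_eq_monomial, poch_zero] using h
  | succ J ih =>
    have hsplit : (Polynomial.X ^ k * (1 - Polynomial.X ^ 2) ^ (J + 1) : Polynomial ℝ)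
        = Polynomial.X ^ k * (1 - Polynomial.X ^ 2) ^ J
          - Polynomial.X ^ (k + 2) * (1 - Polynomial.X ^ 2) ^ J := by ring
    have h₁ := ih k
    have h₂ := ih (k + 2)
    rw [show 2 * J + (k + 2) + d = 2 * J + k + d + 2 by ring, radialMoment_add_two,
      gaussMoment_add_two] at h₂
    rw [hsplit, map_sub, show 2 * (J + 1) + k + d = 2 * J + k + d + 2 by ring,
      radialMoment_add_two, poch_succ]
    push_cast at h₁ h₂ ⊢
    linear_combination (2 * J + k + d + 1) / 2 * h₁ - h₂

lemma polynomial_lhom_ext_X_pow {M : Type*} [AddCommGroup M] [Module ℝ M]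
    {f g : Polynomial ℝ →ₗ[ℝ] M} (h : ∀ k, f (Polynomial.X ^ k) = g (Polynomial.X ^ k)) : f = g :=
  Polynomial.lhom_ext' fun k => LinearMap.ext_ring <| by
    simpa [← Polynomial.X_pow_eq_monomial] using h k

end SphericalMeans

section ZonalReduction

variable {d : ℕ}

lemma eval_single_zero_monomial (γ : Fin (d + 1) →₀ ℕ) :
    MvPolynomial.eval (Pi.single 0 1) (MvPolynomial.monomial γ (1 : ℝ))
      = 0 ^ ∑ j : Fin d, γ j.succ := by
  rw [MvPolynomial.eval_monomial, one_mul, Finsupp.prod_fintype _ _ fun _ => pow_zero _,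
    Fin.prod_univ_succ, Pi.single_eq_same, one_pow, one_mul, ← Finset.prod_pow_eq_pow_sum]
  simp only [Pi.single_eq_of_ne (Fin.succ_ne_zero _)]

lemma sphMean_monomial_mul_X_pow (γ : Fin (d + 1) →₀ ℕ) (k : ℕ) :
    sphMean d (MvPolynomial.monomial γ 1 * MvPolynomial.X 0 ^ k) *
        radialMoment (∑ j : Fin d, γ j.succ + (γ 0 + k) + d)
      = gaussMoment (γ 0 + k) * (∏ j : Fin d, gaussMoment (γ j.succ)) / sphArea d := by
  have h := sphMean_monomial_mul_radialMoment (γ + Finsupp.single 0 k)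
  rw [map_add, Finsupp.degree_single, Finsupp.degree_eq_sum, Fin.sum_univ_succ,
    Fin.prod_univ_succ] at h
  simp only [Finsupp.add_apply, Finsupp.single_eq_same,
    Finsupp.single_eq_of_ne (Fin.succ_ne_zero _), add_zero] at h
  rw [MvPolynomial.X_pow_eq_monomial, MvPolynomial.monomial_mul, one_mul, ← h]
  congr 2
  ring

lemma natDegree_X_pow_mul_one_sub_sq_pow_le (a J : ℕ) :
    (Polynomial.X ^ a * (1 - Polynomial.X ^ 2) ^ J : Polynomial ℝ).natDegree ≤ a + 2 * J := by
  have hdeg : (1 - Polynomial.X ^ 2 : Polynomial ℝ).natDegree ≤ 2 := by compute_degree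
  rw [mul_comm 2]
  exact Polynomial.natDegree_mul_le_of_le (Polynomial.natDegree_X_pow_le a)
    (Polynomial.natDegree_pow_le_of_le J hdeg)

lemma exists_axialMean_eq_sphMean_monomial_mul_X_pow (hd : 0 < d) (γ : Fin (d + 1) →₀ ℕ) :
    ∃ p : Polynomial ℝ, p.natDegree ≤ γ.degree ∧ p.eval 1 = 0 ^ ∑ j : Fin d, γ j.succ ∧
      ∀ k, sphMean d (MvPolynomial.monomial γ 1 * MvPolynomial.X 0 ^ k)
        = axialMean d (p * Polynomial.X ^ k) := by
  by_cases hG : ∏ j : Fin d, gaussMoment (γ j.succ) = 0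
  · obtain ⟨j, -, hj⟩ := Finset.prod_eq_zero_iff.1 hG
    have hsum : ∑ j : Fin d, γ j.succ ≠ 0 := fun h =>
      gaussMoment_zero_pos.ne' (by rwa [(Finset.sum_eq_zero_iff.1 h) j (Finset.mem_univ j)] at hj)
    refine ⟨0, by simp, by simp [hsum], fun k => ?_⟩
    have h := sphMean_monomial_mul_X_pow γ k
    rw [hG, mul_zero, zero_div] at h
    simpa using (mul_eq_zero.1 h).resolve_right (radialMoment_pos _).ne'
  · have heven (j : Fin d) : Even (γ j.succ) := by
      by_contra hj
      exact hG (Finset.prod_eq_zero (Finset.mem_univ j)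
        (gaussMoment_of_odd (Nat.not_even_iff_odd.1 hj)))
    obtain ⟨J, hJ⟩ := (Finset.even_sum _ fun j _ => heven j).two_dvd
    have hpoch := poch_pos (show (0 : ℝ) < d / 2 by positivity) J
    have hgauss := pow_pos gaussMoment_zero_pos d
    set c := (∏ j : Fin d, gaussMoment (γ j.succ)) / (gaussMoment 0 ^ d * poch (d / 2) J) with hc
    refine ⟨c • (Polynomial.X ^ γ 0 * (1 - Polynomial.X ^ 2) ^ J), ?_, ?_, fun k => ?_⟩
    · rw [Finsupp.degree_eq_sum, Fin.sum_univ_succ, hJ]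
      exact (Polynomial.natDegree_smul_le _ _).trans (natDegree_X_pow_mul_one_sub_sq_pow_le _ _)
    · rw [hJ]
      rcases J.eq_zero_or_pos with rfl | hJpos
      · have hγ (j : Fin d) : γ j.succ = 0 := Finset.sum_eq_zero_iff.1 hJ j (Finset.mem_univ j)
        simp [hc, hγ, poch_zero, gaussMoment_zero_pos.ne']
      · simp [hJpos.ne']
    · have h₁ := sphMean_monomial_mul_X_pow γ k
      have h₂ := axialMean_X_pow_mul_one_sub_sq_pow (d := d) (γ 0 + k) J
      rw [hJ] at h₁
      refine mul_right_cancel₀ (radialMoment_pos (2 * J + (γ 0 + k) + d)).ne' ?_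
      rw [h₁, smul_mul_assoc, mul_right_comm, ← pow_add, map_smul, smul_eq_mul, mul_assoc, h₂, hc]
      field_simp

lemma exists_axialMean_eq_sphMean_monomial_mul (hd : 0 < d) (γ : Fin (d + 1) →₀ ℕ) :
    ∃ p : Polynomial ℝ, p.natDegree ≤ γ.degree ∧
      p.eval 1 = MvPolynomial.eval (Pi.single 0 1) (MvPolynomial.monomial γ 1) ∧
      ∀ g, sphMean d (MvPolynomial.monomial γ 1 * Polynomial.aeval (MvPolynomial.X 0) g)
        = axialMean d (p * g) := by
  obtain ⟨p, hdeg, hone, hp⟩ := exists_axialMean_eq_sphMean_monomial_mul_X_pow hd γ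
  refine ⟨p, hdeg, hone.trans (eval_single_zero_monomial γ).symm, fun g => ?_⟩
  refine LinearMap.congr_fun (polynomial_lhom_ext_X_pow fun k => ?_ :
    sphMean d ∘ₗ LinearMap.mulLeft ℝ (MvPolynomial.monomial γ 1) ∘ₗ
      (Polynomial.aeval (MvPolynomial.X 0)).toLinearMap = axialMean d ∘ₗ LinearMap.mulLeft ℝ p) g
  simpa using hp k

lemma exists_axialMean_eq_sphMean_mul (hd : 0 < d) (P : MvPolynomial (Fin (d + 1)) ℝ) :
    ∃ p : Polynomial ℝ, p.natDegree ≤ P.totalDegree ∧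
      p.eval 1 = MvPolynomial.eval (Pi.single 0 1) P ∧
      ∀ g, sphMean d (P * Polynomial.aeval (MvPolynomial.X 0) g) = axialMean d (p * g) := by
  choose p hdeg hone hp using exists_axialMean_eq_sphMean_monomial_mul hd
  have hP : P = ∑ γ ∈ P.support, P.coeff γ • MvPolynomial.monomial γ (1 : ℝ) := by
    conv_lhs => rw [P.as_sum]
    simp [MvPolynomial.smul_monomial]
  refine ⟨∑ γ ∈ P.support, P.coeff γ • p γ, ?_, ?_, fun g => ?_⟩
  · refine Polynomial.natDegree_sum_le_of_forall_le _ _ fun γ hγ => ?_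
    exact (Polynomial.natDegree_smul_le _ _).trans
      ((hdeg γ).trans (MvPolynomial.le_totalDegree hγ))
  · conv_rhs => rw [hP]
    simp only [Polynomial.eval_finsetSum, Polynomial.eval_smul, hone, map_sum,
      MvPolynomial.smul_eval, smul_eq_mul]
  · conv_lhs => rw [hP]
    simp only [Finset.sum_mul, smul_mul_assoc, map_sum, map_smul, hp]

end ZonalReduction

section AxialDistribution

variable {d : ℕ}

lemma axialMean_X_pow_mul_radialMoment (k : ℕ) :
    axialMean d (Polynomial.X ^ k) * radialMoment (k + d)
      = gaussMoment k * gaussMoment 0 ^ d / sphArea d := by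
  simpa [poch_zero] using axialMean_X_pow_mul_one_sub_sq_pow (d := d) k 0

lemma axialMean_X_pow_of_odd {k : ℕ} (hk : Odd k) : axialMean d (Polynomial.X ^ k) = 0 := by
  have h := axialMean_X_pow_mul_radialMoment (d := d) k
  rw [gaussMoment_of_odd hk, zero_mul, zero_div] at h
  exact (mul_eq_zero.1 h).resolve_right (radialMoment_pos _).ne'

lemma axialMean_X_pow_add_two (k : ℕ) :
    (k + d + 1) * axialMean d (Polynomial.X ^ (k + 2))
      = (k + 1) * axialMean d (Polynomial.X ^ k) := by
  have h₁ := axialMean_X_pow_mul_radialMoment (d := d) k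
  have h₂ := axialMean_X_pow_mul_radialMoment (d := d) (k + 2)
  rw [add_right_comm, radialMoment_add_two, gaussMoment_add_two] at h₂
  refine mul_right_cancel₀ (radialMoment_pos (k + d)).ne' ?_
  push_cast at h₂
  linear_combination 2 * h₂ - (k + 1) * h₁

lemma axialMean_comp_neg (g : Polynomial ℝ) :
    axialMean d (g.comp (-Polynomial.X)) = axialMean d g := by
  refine LinearMap.congr_fun (polynomial_lhom_ext_X_pow fun k => ?_ :
    axialMean d ∘ₗ (Polynomial.aeval (-Polynomial.X)).toLinearMap = axialMean d) g
  rcases k.even_or_odd with hk | hk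
  · simp [hk.neg_pow]
  · simp [hk.neg_pow, axialMean_X_pow_of_odd hk]

lemma axialMean_one_sub_sq_mul_derivative (g : Polynomial ℝ) :
    axialMean d ((1 - Polynomial.X ^ 2) * Polynomial.derivative g)
      = d * axialMean d (Polynomial.X * g) := by
  refine LinearMap.congr_fun (polynomial_lhom_ext_X_pow fun k => ?_ :
    axialMean d ∘ₗ LinearMap.mulLeft ℝ (1 - Polynomial.X ^ 2) ∘ₗ Polynomial.derivative
      = (d : ℝ) • axialMean d ∘ₗ LinearMap.mulLeft ℝ Polynomial.X) g
  rcases k with _ | k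
  · simpa using Or.inr (axialMean_X_pow_of_odd (d := d) odd_one)
  · have hderiv : ((1 - Polynomial.X ^ 2) * Polynomial.derivative (Polynomial.X ^ (k + 1)) :
        Polynomial ℝ) = ((k : ℝ) + 1) • (Polynomial.X ^ k - Polynomial.X ^ (k + 2)) := by
      rw [Polynomial.derivative_X_pow, Polynomial.smul_eq_C_mul]
      simp
      ring
    simp only [LinearMap.comp_apply, LinearMap.mulLeft_apply, LinearMap.smul_apply, hderiv,
      map_smul, map_sub, smul_eq_mul, ← pow_succ']
    linear_combination -axialMean_X_pow_add_two (d := d) k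

/-- The expectation of `g((1 - t) / 2)` for `t` distributed as one coordinate on `S^d`; it is the
integral of `g (hav x y)` over `y`, for any `x`. -/
def havMean (d : ℕ) : Polynomial ℝ →ₗ[ℝ] ℝ :=
  axialMean d ∘ₗ (Polynomial.aeval (Polynomial.C 2⁻¹ * (1 - Polynomial.X))).toLinearMap

lemma havMean_apply (g : Polynomial ℝ) :
    havMean d g = axialMean d (g.comp (Polynomial.C 2⁻¹ * (1 - Polynomial.X))) := rfl

lemma two_mul_C_inv_two : (2 : Polynomial ℝ) * Polynomial.C 2⁻¹ = 1 := by
  rw [show (2 : Polynomial ℝ) = Polynomial.C 2 from rfl, ← Polynomial.C_mul,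
    mul_inv_cancel₀ two_ne_zero, Polynomial.C_1]

lemma havMean_one : havMean d 1 = 1 := by
  simp [havMean_apply, axialMean_apply, sphMean_apply]

lemma havMean_X_pow_succ (k : ℕ) :
    (2 * d + 2 * k) * havMean d (Polynomial.X ^ (k + 1))
      = (d + 2 * k) * havMean d (Polynomial.X ^ k) := by
  set u : Polynomial ℝ := Polynomial.C 2⁻¹ * (1 - Polynomial.X) with hu
  have hX : Polynomial.X = 1 - 2 * u := by
    linear_combination (1 - Polynomial.X) * two_mul_C_inv_two
  have hderiv : (1 - Polynomial.X ^ 2) * Polynomial.derivative (u ^ k)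
      = -((2 * k : ℝ) • (u ^ k - u ^ (k + 1))) := by
    have hu' : Polynomial.derivative u = -Polynomial.C 2⁻¹ := by
      simp [hu]
    clear_value u
    rcases k with _ | k
    · simp
    · rw [Polynomial.derivative_pow_succ, hu', hX, Polynomial.smul_eq_C_mul]
      simp only [Polynomial.C_mul, Polynomial.C_ofNat, Polynomial.C_add, Polynomial.C_1,
        map_natCast]
      push_cast
      linear_combination -2 * (k + 1) * u ^ (k + 1) * (1 - u) * two_mul_C_inv_two
  have h := axialMean_one_sub_sq_mul_derivative (d := d) (u ^ k)
  have hXu : Polynomial.X * u ^ k = u ^ k - (2 : ℝ) • u ^ (k + 1) := by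
    nth_rewrite 1 [hX]
    rw [Polynomial.smul_eq_C_mul, Polynomial.C_ofNat]
    ring
  rw [hderiv, hXu, map_neg, map_smul, map_sub, map_sub, map_smul, smul_eq_mul, smul_eq_mul] at h
  simp only [havMean_apply, Polynomial.X_pow_comp]
  linear_combination h

lemma hasBetaMoments_havMean (hd : 0 < d) : HasBetaMoments (d / 2) (d / 2) (havMean d) := by
  intro k
  have hd' : (0 : ℝ) < d := Nat.cast_pos.2 hd
  induction k with
  | zero => simp [poch_zero, havMean_one]
  | succ k ih =>
    have h := havMean_X_pow_succ (d := d) k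
    have hpos := poch_pos hd' k
    rw [add_halves] at ih ⊢
    rw [ih] at h
    rw [poch_succ, poch_succ, eq_div_iff (by positivity)]
    field_simp at h ⊢
    linear_combination h

lemma havMean_comp_one_sub (g : Polynomial ℝ) :
    havMean d (g.comp (1 - Polynomial.X)) = havMean d g := by
  rw [havMean_apply, havMean_apply, ← axialMean_comp_neg, Polynomial.comp_assoc,
    Polynomial.comp_assoc]
  congr 2
  simp only [Polynomial.sub_comp, Polynomial.one_comp, Polynomial.X_comp, Polynomial.mul_comp,
    Polynomial.C_comp, sub_neg_eq_add]
  linear_combination -two_mul_C_inv_two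

lemma havMean_one_sub_X_pow (hd : 0 < d) (J : ℕ) :
    havMean d ((1 - Polynomial.X) ^ J) = poch (d / 2) J / poch (d / 2 + d / 2) J := by
  rw [← hasBetaMoments_havMean hd J, ← havMean_comp_one_sub (Polynomial.X ^ J),
    Polynomial.X_pow_comp]

end AxialDistribution

section RotationInvariance

variable {d : ℕ}

/-- The action of a linear isometry on the sphere. -/
def sphMap (φ : EuclideanSpace ℝ (Fin (d + 1)) ≃ₗᵢ[ℝ] EuclideanSpace ℝ (Fin (d + 1)))
    (y : Sph d) : Sph d :=
  ⟨φ y, by simp⟩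

lemma continuous_sphMap
    (φ : EuclideanSpace ℝ (Fin (d + 1)) ≃ₗᵢ[ℝ] EuclideanSpace ℝ (Fin (d + 1))) :
    Continuous (sphMap φ) :=
  (φ.continuous.comp continuous_subtype_val).subtype_mk _

open scoped Pointwise in
lemma Ioo_smul_sphMap_preimage
    (φ : EuclideanSpace ℝ (Fin (d + 1)) ≃ₗᵢ[ℝ] EuclideanSpace ℝ (Fin (d + 1))) (s : Set (Sph d)) :
    Ioo (0 : ℝ) 1 • (Subtype.val '' (sphMap φ ⁻¹' s) : Set (EuclideanSpace ℝ (Fin (d + 1))))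
      = φ ⁻¹' (Ioo (0 : ℝ) 1 • (Subtype.val '' s)) := by
  ext z
  simp only [Set.mem_smul, Set.mem_image, Set.mem_preimage]
  constructor
  · rintro ⟨a, ha, _, ⟨y, hy, rfl⟩, rfl⟩
    exact ⟨a, ha, _, ⟨_, hy, rfl⟩, by simp [sphMap]⟩
  · rintro ⟨a, ha, _, ⟨y, hy, rfl⟩, hz⟩
    refine ⟨a, ha, _, ⟨sphMap φ.symm y, by simpa [sphMap] using hy, rfl⟩, φ.injective ?_⟩
    simpa [sphMap] using hz

lemma measurePreserving_sphMap
    (φ : EuclideanSpace ℝ (Fin (d + 1)) ≃ₗᵢ[ℝ] EuclideanSpace ℝ (Fin (d + 1))) :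
    MeasurePreserving (sphMap φ) (sphMeasure d) (sphMeasure d) := by
  have hmeas := (continuous_sphMap φ).measurable
  refine ⟨hmeas, Measure.ext fun s hs => ?_⟩
  rw [Measure.map_apply hmeas hs, sphMeasure, Measure.smul_apply, Measure.smul_apply,
    Measure.toSphere_apply' _ hs, Measure.toSphere_apply' _ (hmeas hs), Ioo_smul_sphMap_preimage]
  congr 2
  exact φ.measurePreserving.measure_preimage_equiv (f := φ.toHomeomorph.toMeasurableEquiv) _

lemma integral_comp_sphMap
    (φ : EuclideanSpace ℝ (Fin (d + 1)) ≃ₗᵢ[ℝ] EuclideanSpace ℝ (Fin (d + 1)))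
    {f : Sph d → ℝ} (hf : Continuous f) :
    ∫ y, f (sphMap φ y) ∂sphMeasure d = ∫ y, f y ∂sphMeasure d := by
  conv_rhs => rw [← (measurePreserving_sphMap φ).map_eq]
  rw [integral_map (measurePreserving_sphMap φ).aemeasurable hf.aestronglyMeasurable]

lemma exists_isometry_single_zero_eq (x : Sph d) :
    ∃ φ : EuclideanSpace ℝ (Fin (d + 1)) ≃ₗᵢ[ℝ] EuclideanSpace ℝ (Fin (d + 1)),
      φ (EuclideanSpace.single 0 1) = x :=
  ⟨(ℝ ∙ ((EuclideanSpace.single 0 1 : EuclideanSpace ℝ (Fin (d + 1))) - x))ᗮ.reflection,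
    Submodule.reflection_sub (by simp)⟩

lemma totalDegree_bind₁_le {σ τ R : Type*} [CommSemiring R] {f : σ → MvPolynomial τ R}
    (hf : ∀ i, (f i).totalDegree ≤ 1) (P : MvPolynomial σ R) :
    (MvPolynomial.bind₁ f P).totalDegree ≤ P.totalDegree := by
  conv_lhs => rw [P.as_sum, map_sum]
  refine MvPolynomial.totalDegree_finsetSum_le fun γ hγ => ?_
  rw [MvPolynomial.bind₁_monomial]
  refine (MvPolynomial.totalDegree_mul _ _).trans ?_
  rw [MvPolynomial.totalDegree_C, zero_add]
  refine (MvPolynomial.totalDegree_finsetProd _ _).trans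
    ((Finset.sum_le_sum fun i _ => ?_).trans (MvPolynomial.le_totalDegree hγ))
  exact (MvPolynomial.totalDegree_pow _ _).trans (mul_le_of_le_one_right' (hf i))

lemma exists_eval_eq_eval_comp_linearMap {ι κ : Type*} [Finite ι] [Finite κ]
    (φ : EuclideanSpace ℝ ι →ₗ[ℝ] EuclideanSpace ℝ κ) (P : MvPolynomial κ ℝ) :
    ∃ Q : MvPolynomial ι ℝ, Q.totalDegree ≤ P.totalDegree ∧
      ∀ y, MvPolynomial.eval y.ofLp Q = MvPolynomial.eval (φ y).ofLp P := by
  classical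
  have := Fintype.ofFinite ι
  have := Fintype.ofFinite κ
  set M := LinearMap.toMatrix (EuclideanSpace.basisFun ι ℝ).toBasis
    (EuclideanSpace.basisFun κ ℝ).toBasis φ
  refine ⟨MvPolynomial.bind₁ M.toMvPolynomial P,
    totalDegree_bind₁_le M.toMvPolynomial_totalDegree_le P, fun y => ?_⟩
  have hM : M.mulVec y.ofLp = (φ y).ofLp := LinearMap.toMatrix_mulVec_repr _ _ φ y
  simp only [← MvPolynomial.coe_aeval_eq_eval, RingHom.coe_coe, MvPolynomial.aeval_bind₁]
  congr 2
  ext i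
  simp [Matrix.toMvPolynomial_eval_eq_apply, hM]

/-- The haversine of the angle between `x` and `y`: the coordinate in which the distribution of
`y` is Beta`(d/2, d/2)`. -/
def hav (x y : Sph d) : ℝ := (1 - ip x y) / 2

lemma continuous_hav (x : Sph d) : Continuous (hav x) := by
  unfold hav ip
  fun_prop

lemma continuous_eval_hav (g : Polynomial ℝ) (x : Sph d) :
    Continuous fun y => g.eval (hav x y) :=
  g.continuous.comp (continuous_hav x)

lemma eval_aeval_X {σ : Type*} (v : σ → ℝ) (i : σ) (g : Polynomial ℝ) :
    MvPolynomial.eval v (Polynomial.aeval (MvPolynomial.X i) g) = g.eval (v i) := by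
  simpa [MvPolynomial.coe_aeval_eq_eval] using
    (Polynomial.aeval_algHom_apply (MvPolynomial.aeval v) (MvPolynomial.X i) g).symm

lemma hav_sphMap {φ : EuclideanSpace ℝ (Fin (d + 1)) ≃ₗᵢ[ℝ] EuclideanSpace ℝ (Fin (d + 1))}
    {x : Sph d} (hφ : φ (EuclideanSpace.single 0 1) = x) (y : Sph d) :
    hav x (sphMap φ y) = 2⁻¹ * (1 - y.1 0) := by
  have hip : ip x (sphMap φ y) = y.1 0 := by
    rw [ip, ← hφ, sphMap, φ.inner_map_map, EuclideanSpace.inner_single_left, map_one, one_mul]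
  rw [hav, hip, inv_mul_eq_div]

theorem exists_havMean_eq_integral_eval_mul (hd : 0 < d) (P : MvPolynomial (Fin (d + 1)) ℝ)
    (x : Sph d) :
    ∃ p : Polynomial ℝ, p.natDegree ≤ P.totalDegree ∧ p.eval 0 = MvPolynomial.eval x.1.ofLp P ∧
      ∀ g : Polynomial ℝ, ∫ y : Sph d, MvPolynomial.eval y.1.ofLp P * g.eval (hav x y)
        ∂sphMeasure d = havMean d (p * g) := by
  obtain ⟨φ, hφ⟩ := exists_isometry_single_zero_eq x
  obtain ⟨Q, hQdeg, hQ⟩ := exists_eval_eq_eval_comp_linearMap φ.toLinearMap P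
  obtain ⟨q, hqdeg, hq, hqmean⟩ := exists_axialMean_eq_sphMean_mul hd Q
  refine ⟨q.comp (1 - 2 * Polynomial.X), ?_, ?_, fun g => ?_⟩
  · have hdeg : (1 - 2 * Polynomial.X : Polynomial ℝ).natDegree ≤ 1 := by compute_degree
    rw [Polynomial.natDegree_comp]
    exact (mul_le_of_le_one_right' hdeg).trans (hqdeg.trans hQdeg)
  · rw [← hφ]
    simpa [hq] using hQ (EuclideanSpace.single 0 1)
  · have hcomp : (1 - 2 * Polynomial.X : Polynomial ℝ).comp
        (Polynomial.C 2⁻¹ * (1 - Polynomial.X)) = Polynomial.X := by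
      simp only [Polynomial.sub_comp, Polynomial.one_comp, Polynomial.mul_comp, Polynomial.X_comp,
        Polynomial.ofNat_comp]
      linear_combination (Polynomial.X - 1) * two_mul_C_inv_two
    rw [havMean_apply, Polynomial.mul_comp, Polynomial.comp_assoc, hcomp, Polynomial.comp_X,
      ← hqmean, sphMean_apply,
      ← integral_comp_sphMap φ ((continuous_eval_sph P).fun_mul (continuous_eval_hav g x))]
    refine integral_congr_ae (.of_forall fun y => ?_)
    have hPy : MvPolynomial.eval (sphMap φ y).1.ofLp P = MvPolynomial.eval y.1.ofLp Q :=
      (hQ y).symm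
    simp [hPy, hav_sphMap hφ, eval_aeval_X, Polynomial.eval_comp]

lemma integral_eval_hav_eq_havMean (hd : 0 < d) (g : Polynomial ℝ) (x : Sph d) :
    ∫ y, g.eval (hav x y) ∂sphMeasure d = havMean d g := by
  obtain ⟨p, hdeg, hp, hpmean⟩ := exists_havMean_eq_integral_eval_mul hd 1 x
  have hpone : p = 1 := by
    rw [MvPolynomial.totalDegree_one, Nat.le_zero] at hdeg
    rw [Polynomial.eq_C_of_natDegree_eq_zero hdeg, Polynomial.coeff_zero_eq_eval_zero, hp, map_one,
      Polynomial.C_1]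
  simpa [hpone] using hpmean g

end RotationInvariance

section ZonalConvolution

variable {d : ℕ}

lemma dist_sq_eq_four_mul_hav (x y : Sph d) : dist x y ^ 2 = 4 * hav x y := by
  rw [Subtype.dist_eq, dist_eq_norm, norm_sub_sq_real, norm_eq_of_mem_sphere,
    norm_eq_of_mem_sphere, hav, ip]
  ring

lemma hav_nonneg (x y : Sph d) : 0 ≤ hav x y := by
  linarith [dist_sq_eq_four_mul_hav x y, sq_nonneg (dist x y)]

lemma hav_le_one (x y : Sph d) : hav x y ≤ 1 := by
  have hip := neg_le_of_abs_le (abs_real_inner_le_norm x.1 y.1)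
  rw [norm_eq_of_mem_sphere, norm_eq_of_mem_sphere, one_mul] at hip
  rw [hav, ip]
  linarith

lemma ip_eq_sum (x y : Sph d) : ip x y = ∑ i, x.1 i * y.1 i := by
  simp [ip, PiLp.inner_apply, mul_comm]

lemma integral_mul_ip {f : Sph d → ℝ} (hf : Continuous f) (x : Sph d) :
    ∫ y, f y * ip x y ∂sphMeasure d = ∑ i, x.1 i * ∫ y, f y * y.1 i ∂sphMeasure d := by
  simp_rw [ip_eq_sum, Finset.mul_sum, ← integral_const_mul]
  rw [integral_finsetSum _ fun i _ => integrable_of_continuous_sph (by fun_prop)]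
  simp only [mul_left_comm]

lemma integral_mul_hav {f : Sph d → ℝ} (hf : Continuous f) (x : Sph d) :
    ∫ y, f y * hav x y ∂sphMeasure d =
      2⁻¹ * (∫ y, f y ∂sphMeasure d - ∑ i, x.1 i * ∫ y, f y * y.1 i ∂sphMeasure d) := by
  have hip : Continuous (ip x) := by unfold ip; fun_prop
  rw [← integral_mul_ip hf, ← integral_sub (integrable_of_continuous_sph hf)
    (integrable_of_continuous_sph (hf.fun_mul hip)), ← integral_const_mul]
  refine integral_congr_ae (.of_forall fun y => ?_)
  simp only [hav]
  ring

lemma integral_mul_eval_hav_eq_divX {f : Sph d → ℝ} (hf : Continuous f) (g : Polynomial ℝ)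
    (x : Sph d) :
    ∫ y, f y * g.eval (hav x y) ∂sphMeasure d =
      2⁻¹ * (∫ y, f y * g.divX.eval (hav x y) ∂sphMeasure d
        - ∑ i, x.1 i * ∫ y, f y * y.1 i * g.divX.eval (hav x y) ∂sphMeasure d)
      + g.coeff 0 * ∫ y, f y ∂sphMeasure d := by
  have hfg : Continuous fun y => f y * g.divX.eval (hav x y) := hf.mul (continuous_eval_hav _ x)
  have hsplit (y : Sph d) : f y * g.eval (hav x y) =
      f y * g.divX.eval (hav x y) * hav x y + g.coeff 0 * f y := by
    conv_lhs => rw [← g.divX_mul_X_add]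
    simp only [Polynomial.eval_add, Polynomial.eval_mul, Polynomial.eval_X, Polynomial.eval_C]
    ring
  simp_rw [hsplit]
  rw [integral_add (integrable_of_continuous_sph (hfg.fun_mul (continuous_hav x)))
    ((integrable_of_continuous_sph hf).const_mul _), integral_mul_hav hfg, integral_const_mul]
  simp only [mul_right_comm]

theorem exists_eval_eq_integral_mul_eval_hav {f : Sph d → ℝ} (hf : Continuous f)
    (g : Polynomial ℝ) :
    ∃ P : MvPolynomial (Fin (d + 1)) ℝ, P.totalDegree ≤ g.natDegree ∧ ∀ x : Sph d,
      MvPolynomial.eval x.1.ofLp P = ∫ y, f y * g.eval (hav x y) ∂sphMeasure d := by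
  induction hN : g.natDegree generalizing f g with
  | zero =>
    rw [Polynomial.eq_C_of_natDegree_eq_zero hN]
    refine ⟨MvPolynomial.C (∫ y, f y * g.coeff 0 ∂sphMeasure d), by simp, fun x => by simp⟩
  | succ N ih =>
    have hdivX : g.divX.natDegree = N := by
      rw [Polynomial.natDegree_divX_eq_natDegree_tsub_one, hN, Nat.add_sub_cancel]
    obtain ⟨P, hPdeg, hP⟩ := ih hf g.divX hdivX
    choose Q hQdeg hQ using fun i : Fin (d + 1) =>
      ih (f := fun y => f y * y.1 i) (by fun_prop) g.divX hdivX
    refine ⟨MvPolynomial.C 2⁻¹ * (P - ∑ i, MvPolynomial.X i * Q i)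
      + MvPolynomial.C (g.coeff 0 * ∫ y, f y ∂sphMeasure d), ?_, fun x => ?_⟩
    · have hsum : (∑ i, MvPolynomial.X i * Q i).totalDegree ≤ N + 1 :=
        MvPolynomial.totalDegree_finsetSum_le fun i _ =>
          (MvPolynomial.totalDegree_mul _ _).trans (by
            rw [MvPolynomial.totalDegree_X, add_comm]
            exact Nat.add_le_add_right (hQdeg i) 1)
      refine (MvPolynomial.totalDegree_add _ _).trans (max_le ?_ ?_)
      · refine (MvPolynomial.totalDegree_mul _ _).trans ?_
        rw [MvPolynomial.totalDegree_C, zero_add]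
        exact (MvPolynomial.totalDegree_sub _ _).trans (max_le (hPdeg.trans N.le_succ) hsum)
      · rw [MvPolynomial.totalDegree_C]
        exact Nat.zero_le _
    · rw [integral_mul_eval_hav_eq_divX hf]
      simp only [map_sub, map_add, map_mul, map_sum, MvPolynomial.eval_C, MvPolynomial.eval_X, hP,
        hQ]

end ZonalConvolution

section PolynomialGrowth

theorem norm_eval_le_of_separated_nodes {ι 𝕜 : Type*} [NormedField 𝕜] {s : Finset ι} {v : ι → 𝕜}
    {q : Polynomial 𝕜} {z : 𝕜} {A D h : ℝ} (hq : q.degree < s.card) (hh : 0 < h)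
    (hsep : ∀ i ∈ s, ∀ j ∈ s, i ≠ j → h ≤ ‖v i - v j‖)
    (hA : ∀ i ∈ s, ‖q.eval (v i)‖ ≤ A) (hz : ∀ i ∈ s, ‖z - v i‖ ≤ D) :
    ‖q.eval z‖ ≤ s.card * (A * (D / h) ^ (s.card - 1)) := by
  classical
  have hinj : Set.InjOn v s := fun i hi j hj hij => by
    by_contra hne
    exact hh.not_ge (by simpa [hij] using hsep i hi j hj hne)
  rw [Lagrange.eq_interpolate hinj hq, Lagrange.interpolate_apply, Polynomial.eval_finsetSum,
    ← nsmul_eq_mul]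
  refine (norm_sum_le _ _).trans (Finset.sum_le_card_nsmul _ _ _ fun j hj => ?_)
  rw [Polynomial.eval_mul, Polynomial.eval_C, norm_mul]
  refine mul_le_mul (hA j hj) ?_ (norm_nonneg _) ((norm_nonneg _).trans (hA j hj))
  rw [Lagrange.basis, Polynomial.eval_prod, norm_prod, ← Finset.card_erase_of_mem hj,
    ← Finset.prod_const]
  refine Finset.prod_le_prod (fun _ _ => norm_nonneg _) fun i hi => ?_
  obtain ⟨hij, hi⟩ := Finset.mem_erase.1 hi
  have hzi := hz i hi
  have hji := hsep j hj i hi hij.symm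
  simp only [Lagrange.basisDivisor, Polynomial.eval_mul, Polynomial.eval_C, Polynomial.eval_sub,
    Polynomial.eval_X, norm_mul, norm_inv]
  rw [inv_mul_eq_div]
  exact div_le_div₀ ((norm_nonneg _).trans hzi) hzi hh hji

lemma abs_sub_div_two_le_norm_exp_sub_exp {a b : ℝ} (hab : |a - b| ≤ 1) :
    |a - b| / 2 ≤ ‖Complex.exp (a * Complex.I) - Complex.exp (b * Complex.I)‖ := by
  have hfactor : Complex.exp (a * Complex.I) - Complex.exp (b * Complex.I) =
      Complex.exp (b * Complex.I) * (Complex.exp (Complex.I * ((a - b : ℝ) : ℂ)) - 1) := by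
    rw [mul_sub, ← Complex.exp_add, mul_one]
    congr 2
    push_cast
    ring
  have hhalf : |(a - b) / 2| = |a - b| / 2 := by rw [abs_div, abs_two]
  have hsin := mul_abs_le_abs_sin (x := (a - b) / 2) (by linarith [pi_gt_three])
  have hpi : 1 / 2 ≤ 2 / π := by
    rw [div_le_div_iff₀ two_pos pi_pos]
    linarith [pi_le_four]
  rw [hfactor, norm_mul, Complex.norm_exp_ofReal_mul_I, one_mul,
    Complex.norm_exp_I_mul_ofReal_sub_one, norm_mul, Real.norm_eq_abs, Real.norm_eq_abs, abs_two]
  nlinarith [abs_nonneg (a - b)]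

theorem norm_eval_exp_mul_I_le {q : Polynomial ℂ} {N : ℕ} {A ε : ℝ} (hN : 0 < N)
    (hq : q.natDegree ≤ N) (hε : 0 < ε) (hε1 : ε ≤ 1)
    (hA : ∀ θ ∈ Icc 0 ε, ‖q.eval (Complex.exp ((θ : ℝ) * Complex.I))‖ ≤ A) (θ : ℝ) :
    ‖q.eval (Complex.exp (θ * Complex.I))‖ ≤ (N + 1) * (A * (4 * N / ε) ^ N) := by
  have hN' : (0 : ℝ) < N := Nat.cast_pos.2 hN
  have hstep : 0 < ε / N := by positivity
  have hmem {j : ℕ} (hj : j ∈ Finset.range (N + 1)) : (j : ℝ) * (ε / N) ∈ Icc 0 ε := by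
    have hj' : (j : ℝ) ≤ N := Nat.cast_le.2 (Nat.lt_succ_iff.1 (Finset.mem_range.1 hj))
    refine ⟨by positivity, ?_⟩
    calc (j : ℝ) * (ε / N) ≤ N * (ε / N) := by gcongr
      _ = ε := mul_div_cancel₀ _ hN'.ne'
  have hsep : ∀ i ∈ Finset.range (N + 1), ∀ j ∈ Finset.range (N + 1), i ≠ j →
      ε / N / 2 ≤ ‖Complex.exp (((i : ℝ) * (ε / N) : ℝ) * Complex.I)
        - Complex.exp (((j : ℝ) * (ε / N) : ℝ) * Complex.I)‖ := by
    intro i hi j hj hij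
    have hone : (1 : ℝ) ≤ |(i : ℝ) - j| := by
      exact_mod_cast Int.one_le_abs (sub_ne_zero.2 (Nat.cast_injective.ne hij : (i : ℤ) ≠ j))
    have hlow : ε / N ≤ |(i : ℝ) * (ε / N) - j * (ε / N)| := by
      rw [← sub_mul, abs_mul, abs_of_pos hstep]
      exact le_mul_of_one_le_left hstep.le hone
    refine (div_le_div_of_nonneg_right hlow two_pos.le).trans
      (abs_sub_div_two_le_norm_exp_sub_exp ?_)
    obtain ⟨hi0, hiε⟩ := hmem hi
    obtain ⟨hj0, hjε⟩ := hmem hj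
    exact abs_le.2 ⟨by linarith, by linarith⟩
  have hunit (t : ℝ) :
      ‖Complex.exp (θ * Complex.I) - Complex.exp (t * Complex.I)‖ ≤ 2 := by
    refine (norm_sub_le _ _).trans ?_
    rw [Complex.norm_exp_ofReal_mul_I, Complex.norm_exp_ofReal_mul_I]
    norm_num
  have hdeg : q.degree < (Finset.range (N + 1)).card := by
    rw [Finset.card_range]
    exact Polynomial.degree_le_natDegree.trans_lt (Nat.cast_lt.2 (Nat.lt_succ_of_le hq))
  have hbound := norm_eval_le_of_separated_nodes hdeg (by positivity) hsep
    (fun j hj => hA _ (hmem hj)) fun j _ => hunit _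
  rw [Finset.card_range, Nat.add_sub_cancel, Nat.cast_add_one] at hbound
  convert hbound using 4
  field_simp
  norm_num

lemma exists_polynomial_eval_exp_eq_exp_mul_cos_add_sin (a b : ℝ) :
    ∃ q : Polynomial ℂ, q.natDegree ≤ 2 ∧ ∀ θ : ℝ, q.eval (Complex.exp (θ * Complex.I)) =
      Complex.exp (θ * Complex.I) * ((a * cos θ + b * sin θ : ℝ) : ℂ) := by
  refine ⟨Polynomial.C ((a : ℂ) / 2) * (Polynomial.X ^ 2 + 1)
    + Polynomial.C (-(b : ℂ) * Complex.I / 2) * (Polynomial.X ^ 2 - 1), by compute_degree,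
    fun θ => ?_⟩
  have hpyth := Complex.sin_sq_add_cos_sq (θ : ℂ)
  simp only [Polynomial.eval_add, Polynomial.eval_mul, Polynomial.eval_C, Polynomial.eval_sub,
    Polynomial.eval_pow, Polynomial.eval_X, Polynomial.eval_one, Complex.exp_mul_I]
  push_cast
  linear_combination (-(a : ℂ) / 2 - b * Complex.I / 2) * hpyth
    + (a / 2 * Complex.sin (θ : ℂ) ^ 2) * Complex.I_sq
    + (-(b : ℂ) * Complex.sin θ * (Complex.cos θ + Complex.sin θ * Complex.I)
      + b * Complex.I / 2 * Complex.sin (θ : ℂ) ^ 2) * Complex.I_sq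

theorem exists_polynomial_eval_exp_eq_exp_pow_mul_eval {ι : Type*} [Finite ι]
    {P : MvPolynomial ι ℝ} {k : ℕ} (hk : P.totalDegree ≤ k) (x u : ι → ℝ) :
    ∃ q : Polynomial ℂ, q.natDegree ≤ 2 * k ∧ ∀ θ : ℝ, q.eval (Complex.exp (θ * Complex.I)) =
      Complex.exp (θ * Complex.I) ^ k *
        (MvPolynomial.eval (cos θ • x + sin θ • u) P : ℝ) := by
  have := Fintype.ofFinite ι
  choose ℓ hℓdeg hℓ using fun i => exists_polynomial_eval_exp_eq_exp_mul_cos_add_sin (x i) (u i)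
  have hγk : ∀ γ ∈ P.support, ∑ i, γ i ≤ k := fun γ hγ => by
    simpa [Finsupp.sum_fintype] using (MvPolynomial.le_totalDegree hγ).trans hk
  refine ⟨∑ γ ∈ P.support, Polynomial.C ((P.coeff γ : ℝ) : ℂ) *
    (Polynomial.X ^ (k - ∑ i, γ i) * ∏ i, ℓ i ^ γ i), ?_, fun θ => ?_⟩
  · refine Polynomial.natDegree_sum_le_of_forall_le _ _ fun γ hγ => ?_
    have hprod : (∏ i, ℓ i ^ γ i).natDegree ≤ 2 * ∑ i, γ i := by
      rw [mul_comm, Finset.sum_mul]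
      exact (Polynomial.natDegree_prod_le _ _).trans
        (Finset.sum_le_sum fun i _ => Polynomial.natDegree_pow_le_of_le _ (hℓdeg i))
    refine (Polynomial.natDegree_C_mul_le _ _).trans (Polynomial.natDegree_mul_le.trans ?_)
    rw [Polynomial.natDegree_X_pow]
    have := hγk γ hγ
    lia
  · rw [Polynomial.eval_finsetSum, MvPolynomial.eval_eq', Complex.ofReal_sum, Finset.mul_sum]
    refine Finset.sum_congr rfl fun γ hγ => ?_
    rw [← Nat.sub_add_cancel (hγk γ hγ), Nat.add_sub_cancel]
    simp only [Polynomial.eval_mul, Polynomial.eval_C, Polynomial.eval_pow, Polynomial.eval_X,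
      Polynomial.eval_prod, hℓ, mul_pow, Finset.prod_mul_distrib, Finset.prod_pow_eq_pow_sum]
    push_cast [Pi.add_apply, Pi.smul_apply, smul_eq_mul]
    simp only [mul_comm (Complex.cos _), mul_comm (Complex.sin _)]
    ring

end PolynomialGrowth

section GreatCircles

variable {V : Type*} [NormedAddCommGroup V] [InnerProductSpace ℝ V]

lemma exists_norm_eq_one_eq_norm_smul {E : Type*} [NormedAddCommGroup E] [NormedSpace ℝ E]
    [Nontrivial E] (w : E) : ∃ u : E, ‖u‖ = 1 ∧ w = ‖w‖ • u := by
  rcases eq_or_ne w 0 with rfl | hw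
  · obtain ⟨u, hu⟩ := exists_norm_eq E zero_le_one
    exact ⟨u, hu, by simp⟩
  · have hw' : ‖w‖ ≠ 0 := norm_ne_zero_iff.2 hw
    exact ⟨‖w‖⁻¹ • w, by simp [norm_smul, hw'], by rw [smul_inv_smul₀ hw']⟩

lemma exists_eq_cos_smul_add_sin_smul {x y : V} (hx : ‖x‖ = 1) (hy : ‖y‖ = 1)
    [Nontrivial (ℝ ∙ x)ᗮ] :
    ∃ (u : V) (θ : ℝ), ‖u‖ = 1 ∧ ⟪x, u⟫ = 0 ∧ y = cos θ • x + sin θ • u := by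
  have horth : ⟪x, y - ⟪x, y⟫ • x⟫ = 0 := by
    rw [inner_sub_right, inner_smul_right, real_inner_self_eq_norm_sq, hx]
    ring
  have hnorm : ‖y - ⟪x, y⟫ • x‖ = √(1 - ⟪x, y⟫ ^ 2) := by
    rw [← sqrt_sq (norm_nonneg _), norm_sub_sq_real, inner_smul_right, real_inner_comm, norm_smul,
      hx, hy, mul_one, Real.norm_eq_abs, sq_abs]
    ring_nf
  obtain ⟨⟨u, hu⟩, hunit, hw⟩ := exists_norm_eq_one_eq_norm_smul
    (⟨y - ⟪x, y⟫ • x, Submodule.mem_orthogonal_singleton_iff_inner_right.2 horth⟩ : (ℝ ∙ x)ᗮ)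
  obtain ⟨hlow, hup⟩ := abs_le.1 (abs_real_inner_le_norm x y)
  refine ⟨u, arccos ⟪x, y⟫, hunit, Submodule.mem_orthogonal_singleton_iff_inner_right.1 hu, ?_⟩
  have hsplit : y - ⟪x, y⟫ • x = √(1 - ⟪x, y⟫ ^ 2) • u := by
    simpa [hnorm] using congrArg Subtype.val hw
  rw [cos_arccos (by simpa [hx, hy] using hlow) (by simpa [hx, hy] using hup), sin_arccos, ← hsplit,
    add_sub_cancel]

lemma norm_cos_smul_add_sin_smul {x u : V} (hx : ‖x‖ = 1) (hu : ‖u‖ = 1) (hxu : ⟪x, u⟫ = 0)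
    (θ : ℝ) : ‖cos θ • x + sin θ • u‖ = 1 := by
  rw [← sq_eq_sq₀ (norm_nonneg _) zero_le_one, norm_add_sq_real, inner_smul_left, inner_smul_right,
    hxu, norm_smul, norm_smul, hx, hu]
  simp

lemma norm_sub_cos_smul_add_sin_smul_le {x u : V} (hx : ‖x‖ = 1) (hu : ‖u‖ = 1)
    (hxu : ⟪x, u⟫ = 0) (θ : ℝ) : ‖x - (cos θ • x + sin θ • u)‖ ≤ |θ| := by
  rw [← abs_of_nonneg (norm_nonneg _), ← sq_le_sq, norm_sub_sq_real,
    norm_cos_smul_add_sin_smul hx hu hxu, inner_add_right, inner_smul_right, inner_smul_right, hxu,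
    real_inner_self_eq_norm_sq, hx]
  linarith [one_sub_sq_div_two_le_cos (x := θ)]

theorem abs_eval_le_of_abs_eval_le_on_cap {d k : ℕ} (hd : 0 < d) (hk : 0 < k)
    {P : MvPolynomial (Fin (d + 1)) ℝ} (hP : P.totalDegree ≤ k) {x : Sph d} {A ε : ℝ} (hε : 0 < ε)
    (hε1 : ε ≤ 1) (hA : ∀ y : Sph d, dist x y ≤ ε → |MvPolynomial.eval y.1.ofLp P| ≤ A)
    (y : Sph d) :
    |MvPolynomial.eval y.1.ofLp P| ≤ (2 * k + 1) * (A * (8 * k / ε) ^ (2 * k)) := by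
  have hx := norm_eq_of_mem_sphere x
  have : Fact (Module.finrank ℝ (EuclideanSpace ℝ (Fin (d + 1))) = d + 1) := ⟨by simp⟩
  have : Nontrivial (ℝ ∙ x.1)ᗮ := Module.nontrivial_of_finrank_pos (R := ℝ) <| by
    rwa [Submodule.finrank_orthogonal_span_singleton (n := d) (ne_zero_of_mem_unit_sphere x)]
  obtain ⟨u, θ, hu, hxu, hy⟩ := exists_eq_cos_smul_add_sin_smul hx (norm_eq_of_mem_sphere y)
  obtain ⟨q, hqdeg, hq⟩ := exists_polynomial_eval_exp_eq_exp_pow_mul_eval hP x.1.ofLp u.ofLp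
  have hnorm (t : ℝ) : ‖q.eval (Complex.exp (t * Complex.I))‖ =
      |MvPolynomial.eval (cos t • x.1 + sin t • u).ofLp P| := by
    rw [hq, norm_mul, norm_pow, Complex.norm_exp_ofReal_mul_I, one_pow, one_mul, Complex.norm_real,
      Real.norm_eq_abs, WithLp.ofLp_add, WithLp.ofLp_smul, WithLp.ofLp_smul]
  have harc : ∀ t ∈ Icc 0 ε, ‖q.eval (Complex.exp ((t : ℝ) * Complex.I))‖ ≤ A := by
    rintro t ⟨ht0, htε⟩
    rw [hnorm]
    refine hA ⟨_, mem_sphere_zero_iff_norm.2 (norm_cos_smul_add_sin_smul hx hu hxu t)⟩ ?_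
    rw [Subtype.dist_eq, dist_eq_norm]
    exact (norm_sub_cos_smul_add_sin_smul_le hx hu hxu t).trans ((abs_of_nonneg ht0).trans_le htε)
  have hbound := norm_eval_exp_mul_I_le (Nat.mul_pos two_pos hk) hqdeg hε hε1 harc θ
  rw [hnorm, ← hy] at hbound
  convert hbound using 3 <;> push_cast <;> ring

end GreatCircles

section ZonalKernel

variable {d n k : ℕ}

/-- The factor of `zonalKernel` responsible for reproducing polynomials. -/
def repFactor (d n k : ℕ) : Polynomial ℝ := kernelPoly (d / 2) (d / 2) (d * n + k) 0

/-- The factor of `zonalKernel` responsible for its decay away from the pole. -/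
def locFactor (d n k : ℕ) : Polynomial ℝ := kernelPoly (d / 2) (d / 2) (d * n) (4 * k)

/-- The kernel of the approximation process, as a polynomial in the haversine distance; it is not
normalized, having mean `kernelMass d n k`. -/
def zonalKernel (d n k : ℕ) : Polynomial ℝ := repFactor d n k * locFactor d n k

/-- The mean of `zonalKernel d n k` over the sphere. -/
def kernelMass (d n k : ℕ) : ℝ := christoffel (d / 2) (d / 2) (d * n + k) 0

lemma kernelMass_pos (hd : 0 < d) (n k : ℕ) : 0 < kernelMass d n k :=
  have hd' : (0 : ℝ) < d / 2 := by positivity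
  christoffel_pos hd' hd' _ _

lemma natDegree_zonalKernel_le (d n k : ℕ) : (zonalKernel d n k).natDegree ≤ d * n + k + d * n :=
  Polynomial.natDegree_mul_le.trans
    (add_le_add (natDegree_kernelPoly_le _ _ _ _) (natDegree_kernelPoly_le _ _ _ _))

lemma havMean_repFactor_mul (hd : 0 < d) {p : Polynomial ℝ} (hp : p.natDegree ≤ d * n + k) :
    havMean d (repFactor d n k * p) = p.eval 0 * kernelMass d n k := by
  have hd' : (0 : ℝ) < d / 2 := by positivity
  simpa [repFactor, kernelMass] using
    (hasBetaMoments_havMean hd).map_kernelPoly_mul hd' hd' 0 hp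

theorem integral_eval_mul_zonalKernel (hd : 0 < d) (n : ℕ) {P : MvPolynomial (Fin (d + 1)) ℝ}
    (hP : P.totalDegree ≤ k) (x : Sph d) :
    ∫ y : Sph d, MvPolynomial.eval y.1.ofLp P * (zonalKernel d n k).eval (hav x y) ∂sphMeasure d =
      MvPolynomial.eval x.1.ofLp P * kernelMass d n k := by
  obtain ⟨p, hpdeg, hp, hpmean⟩ := exists_havMean_eq_integral_eval_mul hd P x
  have hdeg : (p * locFactor d n k).natDegree ≤ d * n + k := by
    have := natDegree_kernelPoly_le (d / 2) (d / 2) (d * n) (4 * k)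
    rw [add_comm]
    exact Polynomial.natDegree_mul_le.trans (add_le_add (hpdeg.trans hP) this)
  rw [hpmean, zonalKernel, mul_left_comm, havMean_repFactor_mul hd hdeg, Polynomial.eval_mul,
    locFactor, kernelPoly_eval_zero, mul_one, hp]

lemma havMean_repFactor_sq (hd : 0 < d) (n k : ℕ) :
    havMean d (repFactor d n k ^ 2) = kernelMass d n k := by
  have hdeg : (repFactor d n k).natDegree ≤ d * n + k := natDegree_kernelPoly_le _ _ _ _
  rw [sq, havMean_repFactor_mul hd hdeg, repFactor, kernelPoly_eval_zero, one_mul]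

lemma integral_abs_repFactor_mul_le (hd : 0 < d) (n k : ℕ) (x : Sph d) {W : Sph d → ℝ}
    (hW : Continuous W) :
    ∫ y, |(repFactor d n k).eval (hav x y)| * W y ∂sphMeasure d ≤
      (kernelMass d n k + ∫ y, W y ^ 2 ∂sphMeasure d) / 2 := by
  have hrep := continuous_eval_hav (repFactor d n k) x
  have hsq : Integrable (fun y => (repFactor d n k).eval (hav x y) ^ 2) (sphMeasure d) :=
    integrable_of_continuous_sph (hrep.pow 2)
  have hWsq : Integrable (fun y => W y ^ 2) (sphMeasure d) :=
    integrable_of_continuous_sph (hW.pow 2)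
  have hmass : ∫ y, (repFactor d n k).eval (hav x y) ^ 2 ∂sphMeasure d = kernelMass d n k := by
    simp_rw [← Polynomial.eval_pow]
    rw [integral_eval_hav_eq_havMean hd, havMean_repFactor_sq hd]
  rw [← hmass, ← integral_add hsq hWsq, ← integral_div]
  refine integral_mono (integrable_of_continuous_sph (hrep.abs.mul hW))
    ((hsq.add hWsq).div_const 2) fun y => ?_
  have := two_mul_le_add_sq |(repFactor d n k).eval (hav x y)| (W y)
  rw [sq_abs] at this
  simp only
  linarith

end ZonalKernel

section KernelWeights

variable {d n k : ℕ} {s : ℝ}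

/-- The near zone of the kernel is `s ≤ (nearScale * n)⁻²`. The value is chosen so that the near
weight, of mean square at most `(exp 6 / (nearScale * n)) ^ d`, is dominated by `kernelMass`, which
is at least `(18 * n)⁻¹ ^ d`. -/
def nearScale : ℕ := ⌈18 * exp 6⌉₊

/-- A majorant of `locFactor` in the near zone. -/
def nearWeight (d n : ℕ) (s : ℝ) : ℝ := exp (3 * d) * (1 - s) ^ (d * (nearScale * n) ^ 2)

/-- The weight `(n * dist x y) ^ (4 * k) * |locFactor|`, written in the variable `s = hav x y`. -/
def farWeight (d n k : ℕ) (s : ℝ) : ℝ := (4 * n ^ 2 * s) ^ (2 * k) * |(locFactor d n k).eval s|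

/-- The combined near and far majorant: multiplied by a bounded constant, it dominates
`(n * dist x y) ^ r * |locFactor|` at `s = hav x y`, for every `r ≤ k`. -/
def kernelWeight (d n k : ℕ) (s : ℝ) : ℝ := nearWeight d n s + farWeight d n k s

/-- A bound for the mean square of `farWeight d n k` in units of `kernelMass d n k`. -/
def farConst (k : ℕ) : ℝ := (1 + 8 * k) ^ (8 * k) * 4 ^ k

lemma eighteen_mul_exp_six_le_nearScale : 18 * exp 6 ≤ nearScale := Nat.le_ceil _

lemma eighteen_le_nearScale : (18 : ℝ) ≤ nearScale :=
  (le_mul_of_one_le_right (by norm_num) (one_le_exp (by norm_num))).trans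
    eighteen_mul_exp_six_le_nearScale

lemma nearWeight_nonneg (d n : ℕ) (hs : s ≤ 1) : 0 ≤ nearWeight d n s :=
  mul_nonneg (exp_pos _).le (pow_nonneg (sub_nonneg.2 hs) _)

lemma farWeight_nonneg (d n k : ℕ) (hs : 0 ≤ s) : 0 ≤ farWeight d n k s := by
  unfold farWeight
  positivity

lemma continuous_nearWeight (d n : ℕ) : Continuous (nearWeight d n) := by
  unfold nearWeight
  fun_prop

lemma continuous_farWeight (d n k : ℕ) : Continuous (farWeight d n k) := by
  unfold farWeight
  fun_prop

lemma continuous_kernelWeight (d n k : ℕ) : Continuous (kernelWeight d n k) :=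
  (continuous_nearWeight d n).add (continuous_farWeight d n k)

lemma exp_neg_two_mul_le_one_sub (hs0 : 0 ≤ s) (hs : s ≤ 1 / 2) : exp (-(2 * s)) ≤ 1 - s := by
  have hpos : 0 < 1 - s := by linarith
  rw [exp_neg, inv_le_comm₀ (exp_pos _) hpos, inv_le_iff_one_le_mul₀ hpos]
  nlinarith [add_one_le_exp (2 * s)]

lemma exp_neg_le_one_sub_pow {N : ℕ} (hs0 : 0 ≤ s) (hs : s ≤ 1 / 2) :
    exp (-(2 * (N * s))) ≤ (1 - s) ^ N := by
  rw [show -(2 * (N * s)) = N * -(2 * s) by ring, exp_nat_mul]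
  exact pow_le_pow_left₀ (exp_pos _).le (exp_neg_two_mul_le_one_sub hs0 hs) N

lemma abs_eval_locFactor_le_exp (hd : 0 < d) (hk : 4 * k ≤ n) (hs : 0 ≤ s) :
    |(locFactor d n k).eval s| ≤ exp (8 * d * (n ^ 2 * s)) := by
  rcases n.eq_zero_or_pos with rfl | hn
  · simp [locFactor, kernelPoly, poch_zero]
  have hd' : (1 : ℝ) ≤ d := Nat.one_le_cast.2 hd
  have hn' : (1 : ℝ) ≤ n := Nat.one_le_cast.2 hn
  have hk' : 4 * (k : ℝ) ≤ n := by exact_mod_cast hk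
  have hd2 : (0 : ℝ) < d / 2 := by positivity
  refine (abs_eval_kernelPoly_le hd2 hd2 (d * n) (4 * k) hs).trans (exp_le_exp.2 ?_)
  push_cast
  rw [div_le_iff₀ (by positivity)]
  calc (d * n : ℝ) * (2 * (d * n) + d / 2 + d / 2 + 4 * k) * s
      ≤ (d * n) * (4 * (d * n)) * s := by
        gcongr
        nlinarith
    _ = 8 * d * (n ^ 2 * s) * (d / 2) := by ring
    _ ≤ 8 * d * (n ^ 2 * s) * (d / 2 + 4 * k + 1) := by
        gcongr
        linarith [(k.cast_nonneg : (0 : ℝ) ≤ k)]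

lemma abs_eval_locFactor_le_nearWeight (hd : 0 < d) (hn : 0 < n) (hk : 4 * k ≤ n) (hs : 0 ≤ s)
    (hnear : (nearScale * n) ^ 2 * s ≤ 1) : |(locFactor d n k).eval s| ≤ nearWeight d n s := by
  have hτ := eighteen_le_nearScale
  have hn' : (1 : ℝ) ≤ n := Nat.one_le_cast.2 hn
  have hn2 : 8 * (n ^ 2 * s) ≤ 1 := by
    refine le_trans ?_ (hnear.trans_eq' (by ring : _ = (nearScale : ℝ) ^ 2 * (n ^ 2 * s)))
    gcongr
    nlinarith
  have hs2 : s ≤ 1 / 2 := by nlinarith [one_le_pow₀ (n := 2) hn']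
  have hpow := exp_neg_le_one_sub_pow (N := d * (nearScale * n) ^ 2) hs hs2
  calc |(locFactor d n k).eval s| ≤ exp (8 * d * (n ^ 2 * s)) :=
        abs_eval_locFactor_le_exp hd hk hs
    _ ≤ exp (3 * d) * exp (-(2 * ((d * (nearScale * n) ^ 2 : ℕ) * s))) := by
        rw [← exp_add, exp_le_exp]
        push_cast
        nlinarith [(d.cast_nonneg : (0 : ℝ) ≤ d)]
    _ ≤ nearWeight d n s := by
        unfold nearWeight
        gcongr

end KernelWeights

section KernelBounds

variable {d n k : ℕ}

lemma rpow_half_le_one_div_pow (hd : 0 < d) {a : ℝ} (ha : 0 < a) {J : ℝ} (hJ : d * a ^ 2 ≤ J) :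
    ((d : ℝ) / (d + J)) ^ (d / 2 : ℝ) ≤ (1 / a) ^ d := by
  have hd' : (0 : ℝ) < d := Nat.cast_pos.2 hd
  have hJ0 : 0 < J := lt_of_lt_of_le (by positivity) hJ
  have hsq : (d : ℝ) / (d + J) ≤ (1 / a) ^ 2 := by
    rw [div_pow, one_pow, div_le_div_iff₀ (by positivity) (by positivity)]
    linarith
  calc ((d : ℝ) / (d + J)) ^ (d / 2 : ℝ) ≤ ((1 / a) ^ 2) ^ (d / 2 : ℝ) := by gcongr
    _ = (1 / a) ^ d := by
      rw [← rpow_natCast_mul (by positivity), ← rpow_natCast]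
      congr 1
      push_cast
      ring

lemma poch_half_div_poch_le (hd : 0 < d) {a : ℝ} (ha : 0 < a) {N : ℕ} (hN : d * a ^ 2 ≤ N) :
    poch (d / 2) N / poch (d / 2 + d / 2) N ≤ (1 / a) ^ d := by
  have hd2 : (0 : ℝ) < d / 2 := by positivity
  refine (poch_div_poch_le hd2 hd2 N).trans ?_
  rw [add_halves]
  exact rpow_half_le_one_div_pow hd ha hN

lemma integral_nearWeight_sq_le (hd : 0 < d) (hn : 0 < n) (hk : k ≤ d * n) (x : Sph d) :
    ∫ y, nearWeight d n (hav x y) ^ 2 ∂sphMeasure d ≤ kernelMass d n k := by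
  have : (0 : ℝ) < n := Nat.cast_pos.2 hn
  have hτ := eighteen_mul_exp_six_le_nearScale
  have hτ0 : (0 : ℝ) < nearScale := lt_of_lt_of_le (by positivity) hτ
  set N := d * (nearScale * n) ^ 2 with hN
  have hsq (y : Sph d) : nearWeight d n (hav x y) ^ 2 =
      exp 6 ^ d * ((1 - Polynomial.X : Polynomial ℝ) ^ (2 * N)).eval (hav x y) := by
    rw [nearWeight, mul_pow, ← exp_nat_mul, ← exp_nat_mul, ← pow_mul, ← hN, mul_comm N]
    simp only [Polynomial.eval_pow, Polynomial.eval_sub, Polynomial.eval_one, Polynomial.eval_X]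
    push_cast
    ring_nf
  have hdecay : poch (d / 2) (2 * N) / poch (d / 2 + d / 2) (2 * N) ≤
      (1 / (nearScale * n) : ℝ) ^ d := by
    refine poch_half_div_poch_le hd (by positivity) ?_
    rw [hN]
    push_cast
    have : 0 ≤ (d : ℝ) * (nearScale * n) ^ 2 := by positivity
    linarith
  have hscale : exp 6 * (1 / (nearScale * n)) * (18 * n) ≤ 1 := by
    rw [mul_one_div, div_mul_eq_mul_div, div_le_one (by positivity)]
    nlinarith
  have hmass : 1 ≤ (18 * n : ℝ) ^ d * kernelMass d n k :=
    one_le_pow_mul_christoffel_half hd hn (by linarith)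
  have hI := kernelMass_pos hd n k
  simp_rw [hsq]
  rw [integral_const_mul, integral_eval_hav_eq_havMean hd, havMean_one_sub_X_pow hd]
  calc exp 6 ^ d * (poch (d / 2) (2 * N) / poch (d / 2 + d / 2) (2 * N))
      ≤ exp 6 ^ d * (1 / (nearScale * n)) ^ d := by gcongr
    _ ≤ exp 6 ^ d * (1 / (nearScale * n)) ^ d * ((18 * n) ^ d * kernelMass d n k) :=
        le_mul_of_one_le_right (by positivity) hmass
    _ = (exp 6 * (1 / (nearScale * n)) * (18 * n)) ^ d * kernelMass d n k := by
        rw [mul_pow, mul_pow]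
        ring
    _ ≤ kernelMass d n k := mul_le_of_le_one_left hI.le (pow_le_one₀ (by positivity) hscale)

lemma havMean_X_pow_mul_locFactor_sq (hd : 0 < d) (n k : ℕ) :
    havMean d (Polynomial.X ^ (4 * k) * locFactor d n k ^ 2) =
      christoffel (d / 2) (d / 2) (d * n) (4 * k) := by
  have hd2 : (0 : ℝ) < d / 2 := by positivity
  have hdeg : (locFactor d n k).natDegree ≤ d * n := natDegree_kernelPoly_le _ _ _ _
  have h := (hasBetaMoments_havMean hd).map_kernelPoly_mul hd2 hd2 (4 * k) hdeg
  rw [locFactor, kernelPoly_eval_zero, one_mul] at h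
  rw [← h, locFactor]
  ring_nf

lemma christoffel_locFactor_le (hd : 0 < d) (hn : 0 < n) (k : ℕ) :
    (2 * n : ℝ) ^ (8 * k) * christoffel (d / 2) (d / 2) (d * n) (4 * k) ≤
      farConst k * kernelMass d n k := by
  have hd' : (1 : ℝ) ≤ d := Nat.one_le_cast.2 hd
  have hn' : (1 : ℝ) ≤ n := Nat.one_le_cast.2 hn
  have hd2 : (0 : ℝ) < d / 2 := by positivity
  have hratio : 2 * (n : ℝ) * ((d / 2 + (4 * k : ℕ)) / (d * n : ℕ)) ≤ 1 + 8 * k := by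
    push_cast
    rw [mul_div_assoc', div_le_iff₀ (by positivity)]
    nlinarith [mul_nonneg (mul_nonneg n.cast_nonneg k.cast_nonneg) (sub_nonneg.2 hd')]
  have hI := kernelMass_pos hd n k
  have hstep := (christoffel_le_pow_mul_christoffel_zero hd2 hd2 (Nat.mul_pos hd hn) (4 * k)).trans
    (mul_le_mul_of_nonneg_left
      (christoffel_zero_le_four_pow_mul_add hd2 hd2 (m := d * n) (by push_cast; nlinarith) k)
      (by positivity))
  rw [show 2 * (4 * k) = 8 * k by ring] at hstep
  calc (2 * n : ℝ) ^ (8 * k) * christoffel (d / 2) (d / 2) (d * n) (4 * k)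
      ≤ (2 * n) ^ (8 * k) *
          (((d / 2 + (4 * k : ℕ)) / (d * n : ℕ)) ^ (8 * k) * (4 ^ k * kernelMass d n k)) :=
        mul_le_mul_of_nonneg_left hstep (by positivity)
    _ = (2 * n * ((d / 2 + (4 * k : ℕ)) / (d * n : ℕ))) ^ (8 * k) * (4 ^ k * kernelMass d n k) := by
        rw [mul_pow _ (_ / _), mul_assoc]
    _ ≤ (1 + 8 * k) ^ (8 * k) * (4 ^ k * kernelMass d n k) := by gcongr
    _ = farConst k * kernelMass d n k := (mul_assoc _ _ _).symm

lemma integral_farWeight_sq_le (hd : 0 < d) (hn : 0 < n) (k : ℕ) (x : Sph d) :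
    ∫ y, farWeight d n k (hav x y) ^ 2 ∂sphMeasure d ≤ farConst k * kernelMass d n k := by
  have hsq (y : Sph d) : farWeight d n k (hav x y) ^ 2 =
      (2 * n) ^ (8 * k) * (Polynomial.X ^ (4 * k) * locFactor d n k ^ 2).eval (hav x y) := by
    simp only [farWeight, Polynomial.eval_mul, Polynomial.eval_pow, Polynomial.eval_X]
    rw [mul_pow, sq_abs, ← pow_mul, show 2 * k * 2 = 4 * k by ring, mul_pow,
      show 8 * k = 2 * (4 * k) by ring, pow_mul (2 * (n : ℝ)), mul_pow, mul_pow, mul_pow]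
    norm_num
    ring
  simp_rw [hsq]
  rw [integral_const_mul, integral_eval_hav_eq_havMean hd, havMean_X_pow_mul_locFactor_sq hd]
  exact christoffel_locFactor_le hd hn k

lemma integral_kernelWeight_sq_le (hd : 0 < d) (hn : 0 < n) (hk : k ≤ d * n) (x : Sph d) :
    ∫ y, kernelWeight d n k (hav x y) ^ 2 ∂sphMeasure d ≤
      2 * (1 + farConst k) * kernelMass d n k := by
  have hint {w : ℝ → ℝ} (hw : Continuous w) :
      Integrable (fun y => w (hav x y) ^ 2) (sphMeasure d) :=
    integrable_of_continuous_sph ((hw.comp (continuous_hav x)).pow 2)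
  have hnear := hint (continuous_nearWeight d n)
  have hfar := hint (continuous_farWeight d n k)
  calc ∫ y, kernelWeight d n k (hav x y) ^ 2 ∂sphMeasure d
      ≤ ∫ y, 2 * (nearWeight d n (hav x y) ^ 2 + farWeight d n k (hav x y) ^ 2) ∂sphMeasure d :=
        integral_mono (hint (continuous_kernelWeight d n k)) ((hnear.add hfar).const_mul 2)
          fun y => add_sq_le
    _ = 2 * (∫ y, nearWeight d n (hav x y) ^ 2 ∂sphMeasure d
          + ∫ y, farWeight d n k (hav x y) ^ 2 ∂sphMeasure d) := by
        rw [integral_const_mul, integral_add hnear hfar]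
    _ ≤ 2 * (1 + farConst k) * kernelMass d n k := by
        linarith [integral_nearWeight_sq_le hd hn hk x, integral_farWeight_sq_le hd hn k x]

theorem abs_integral_mul_zonalKernel_le (hd : 0 < d) (hn : 0 < n) (hk : k ≤ d * n) (x : Sph d)
    {F : Sph d → ℝ} (hF : Continuous F) {D : ℝ} (hD : 0 ≤ D)
    (hFD : ∀ y, |F y| * |(locFactor d n k).eval (hav x y)| ≤ D * kernelWeight d n k (hav x y)) :
    |∫ y, F y * (zonalKernel d n k).eval (hav x y) ∂sphMeasure d| ≤
      D * ((3 / 2 + farConst k) * kernelMass d n k) := by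
  have hW : Continuous fun y => kernelWeight d n k (hav x y) :=
    (continuous_kernelWeight d n k).comp (continuous_hav x)
  have hrep := (continuous_eval_hav (repFactor d n k) x).abs
  calc |∫ y, F y * (zonalKernel d n k).eval (hav x y) ∂sphMeasure d|
      ≤ ∫ y, |F y * (zonalKernel d n k).eval (hav x y)| ∂sphMeasure d :=
        abs_integral_le_integral_abs
    _ ≤ ∫ y, D * (|(repFactor d n k).eval (hav x y)| * kernelWeight d n k (hav x y))
          ∂sphMeasure d := by
        refine integral_mono (integrable_of_continuous_sph
          (hF.mul (continuous_eval_hav _ x)).abs)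
          ((integrable_of_continuous_sph (hrep.mul hW)).const_mul D) fun y => ?_
        simp only [zonalKernel, Polynomial.eval_mul, abs_mul]
        rw [mul_left_comm, mul_left_comm D]
        exact mul_le_mul_of_nonneg_left (hFD y) (abs_nonneg _)
    _ ≤ D * ((3 / 2 + farConst k) * kernelMass d n k) := by
        rw [integral_const_mul]
        refine mul_le_mul_of_nonneg_left ?_ hD
        linarith [integral_abs_repFactor_mul_le hd n k x hW,
          integral_kernelWeight_sq_le hd hn hk x]

end KernelBounds

section PointwiseBounds

variable {d n k : ℕ} {r c : ℝ}

lemma farWeight_hav (d n k : ℕ) (x y : Sph d) :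
    farWeight d n k (hav x y) = (n * dist x y) ^ (4 * k) * |(locFactor d n k).eval (hav x y)| := by
  rw [farWeight, show 4 * (n : ℝ) ^ 2 * hav x y = (n * dist x y) ^ 2 by
    rw [mul_pow, dist_sq_eq_four_mul_hav]; ring, ← pow_mul]
  ring_nf

lemma farWeight_le_kernelWeight (d n k : ℕ) (x y : Sph d) :
    farWeight d n k (hav x y) ≤ kernelWeight d n k (hav x y) :=
  le_add_of_nonneg_left (nearWeight_nonneg d n (hav_le_one x y))

lemma nearWeight_le_kernelWeight (d n k : ℕ) (x y : Sph d) :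
    nearWeight d n (hav x y) ≤ kernelWeight d n k (hav x y) :=
  le_add_of_nonneg_right (farWeight_nonneg d n k (hav_nonneg x y))

lemma rpow_mul_abs_locFactor_le (hd : 0 < d) (hn : 0 < n) (hk : 4 * k ≤ n) (hr : 0 ≤ r)
    (hrk : r ≤ k) (x y : Sph d) :
    (n * dist x y) ^ r * |(locFactor d n k).eval (hav x y)| ≤
      nearScale ^ (4 * k) * kernelWeight d n k (hav x y) := by
  have hτ := eighteen_le_nearScale
  have hρ : 0 ≤ n * dist x y := by positivity
  rcases le_total (nearScale * (n * dist x y)) 2 with hnear | hfar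
  · have hzone : (nearScale * n) ^ 2 * hav x y ≤ 1 := by
      have : (nearScale * (n * dist x y)) ^ 2 ≤ 2 ^ 2 := pow_le_pow_left₀ (by positivity) hnear 2
      rw [← mul_assoc, mul_pow, dist_sq_eq_four_mul_hav] at this
      linarith
    calc (n * dist x y) ^ r * |(locFactor d n k).eval (hav x y)|
        ≤ 1 * nearWeight d n (hav x y) :=
          mul_le_mul (rpow_le_one hρ (by nlinarith) hr)
            (abs_eval_locFactor_le_nearWeight hd hn hk (hav_nonneg x y) hzone)
            (abs_nonneg _) zero_le_one
      _ ≤ nearScale ^ (4 * k) * kernelWeight d n k (hav x y) :=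
          mul_le_mul (one_le_pow₀ (by linarith)) (nearWeight_le_kernelWeight d n k x y)
            (nearWeight_nonneg d n (hav_le_one x y)) (by positivity)
  · have hpow : (n * dist x y) ^ r ≤ nearScale ^ (4 * k) * (n * dist x y) ^ (4 * k) := by
      rw [← mul_pow, ← rpow_natCast]
      refine (rpow_le_rpow hρ (le_mul_of_one_le_left hρ (by linarith)) hr).trans
        (rpow_le_rpow_of_exponent_le (by linarith) ?_)
      push_cast
      linarith
    calc (n * dist x y) ^ r * |(locFactor d n k).eval (hav x y)|
        ≤ nearScale ^ (4 * k) * (n * dist x y) ^ (4 * k) *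
            |(locFactor d n k).eval (hav x y)| := by gcongr
      _ = nearScale ^ (4 * k) * farWeight d n k (hav x y) := by rw [farWeight_hav, mul_assoc]
      _ ≤ nearScale ^ (4 * k) * kernelWeight d n k (hav x y) := by
          gcongr
          exact farWeight_le_kernelWeight d n k x y

lemma dist_rpow_mul_abs_locFactor_le (hd : 0 < d) (hn : 0 < n) (hk : 4 * k ≤ n) (hr : 0 ≤ r)
    (hrk : r ≤ k) (x y : Sph d) :
    dist x y ^ r * |(locFactor d n k).eval (hav x y)| ≤
      nearScale ^ (4 * k) * (n : ℝ) ^ (-r) * kernelWeight d n k (hav x y) := by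
  have hn' : (0 : ℝ) < n := Nat.cast_pos.2 hn
  have hsplit : dist x y ^ r = (n : ℝ) ^ (-r) * (n * dist x y) ^ r := by
    rw [mul_rpow hn'.le dist_nonneg, rpow_neg hn'.le, inv_mul_cancel_left₀ (by positivity)]
  rw [hsplit, mul_assoc, mul_comm _ ((n : ℝ) ^ (-r)), mul_assoc]
  exact mul_le_mul_of_nonneg_left (rpow_mul_abs_locFactor_le hd hn hk hr hrk x y) (by positivity)

lemma pow_mul_abs_locFactor_le_of_le_dist (hn : 0 < n) (hc : 0 < c) (hrk : r ≤ k) {x y : Sph d}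
    (hxy : c / √n ≤ dist x y) :
    (n : ℝ) ^ k * |(locFactor d n k).eval (hav x y)| ≤
      (c ^ (4 * k))⁻¹ * (n : ℝ) ^ (-r) * kernelWeight d n k (hav x y) := by
  have hn' : (1 : ℝ) ≤ n := Nat.one_le_cast.2 hn
  have hsqrt : 0 < √(n : ℝ) := sqrt_pos.2 (by positivity)
  have hρ : c * √n ≤ n * dist x y := by
    rw [div_le_iff₀ hsqrt] at hxy
    calc c * √n ≤ dist x y * √n * √n := by gcongr
      _ = n * dist x y := by rw [mul_assoc, mul_self_sqrt n.cast_nonneg, mul_comm]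
  have hpow : c ^ (4 * k) * (n : ℝ) ^ (2 * k) ≤ (n * dist x y) ^ (4 * k) := by
    refine le_of_eq_of_le ?_ (pow_le_pow_left₀ (by positivity) hρ (4 * k))
    rw [mul_pow, show 4 * k = 2 * (2 * k) by ring, pow_mul (√(n : ℝ)), sq_sqrt n.cast_nonneg]
  have hnk : (n : ℝ) ^ k ≤ (n : ℝ) ^ (-r) * (n : ℝ) ^ (2 * k) := by
    rw [← rpow_natCast, ← rpow_natCast, ← rpow_add (by positivity)]
    refine rpow_le_rpow_of_exponent_le hn' ?_
    push_cast
    linarith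
  calc (n : ℝ) ^ k * |(locFactor d n k).eval (hav x y)|
      ≤ (n : ℝ) ^ (-r) * (n : ℝ) ^ (2 * k) * |(locFactor d n k).eval (hav x y)| := by gcongr
    _ = (c ^ (4 * k))⁻¹ * (n : ℝ) ^ (-r) *
          (c ^ (4 * k) * (n : ℝ) ^ (2 * k) * |(locFactor d n k).eval (hav x y)|) := by
        field_simp
    _ ≤ (c ^ (4 * k))⁻¹ * (n : ℝ) ^ (-r) * farWeight d n k (hav x y) := by
        rw [farWeight_hav]
        gcongr
    _ ≤ (c ^ (4 * k))⁻¹ * (n : ℝ) ^ (-r) * kernelWeight d n k (hav x y) := by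
        gcongr
        exact farWeight_le_kernelWeight d n k x y

end PointwiseBounds

section ApproximationProcess

variable {d n k : ℕ} {r c δ S L : ℝ} {f : Sph d → ℝ} {P : MvPolynomial (Fin (d + 1)) ℝ}

/-- A polynomial of degree at most `k` approximating a function on a cap of radius `c / √n`
deviates from it on the whole sphere by at most `growthConst k c * n ^ k` times the size of the
data. -/
def growthConst (k : ℕ) (c : ℝ) : ℝ := 1 + (2 * k + 1) * (8 * k / c) ^ (2 * k)

/-- In units of `(S + L) * n ^ (-r)`, the factor by which `kernelWeight` must be multiplied to
dominate the local approximation error weighted with `locFactor`: the first term comes from the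
cap of radius `c / √n`, the second from its complement. -/
def errorConst (k : ℕ) (c : ℝ) : ℝ := nearScale ^ (4 * k) + growthConst k c * (c ^ (4 * k))⁻¹

lemma growthConst_nonneg (k : ℕ) (hc : 0 ≤ c) : 0 ≤ growthConst k c := by
  unfold growthConst
  positivity

lemma errorConst_nonneg (k : ℕ) (hc : 0 ≤ c) : 0 ≤ errorConst k c := by
  have := growthConst_nonneg k hc
  unfold errorConst
  positivity

lemma abs_sub_eval_le_growthConst_mul (hd : 0 < d) (hk : 0 < k) (hn : 0 < n) (hc : 0 < c)
    (hc1 : c ≤ 1) (hP : P.totalDegree ≤ k) (hS : ∀ y, |f y| ≤ S) {x : Sph d}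
    (hL : ∀ y, dist x y ≤ c / √n → |f y - MvPolynomial.eval y.1.ofLp P| ≤ L) (y : Sph d) :
    |f y - MvPolynomial.eval y.1.ofLp P| ≤ growthConst k c * (S + L) * n ^ k := by
  have hn' : (1 : ℝ) ≤ n := Nat.one_le_cast.2 hn
  have hsqrt : 1 ≤ √(n : ℝ) := one_le_sqrt.2 hn'
  have hε : 0 < c / √n := by positivity
  have hL0 : 0 ≤ L := (abs_nonneg _).trans (hL x (by simpa using hε.le))
  have hS0 : 0 ≤ S := (abs_nonneg _).trans (hS x)
  have hcap (z : Sph d) (hz : dist x z ≤ c / √n) : |MvPolynomial.eval z.1.ofLp P| ≤ S + L := by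
    have := abs_sub_abs_le_abs_sub (MvPolynomial.eval z.1.ofLp P) (f z)
    rw [abs_sub_comm] at this
    linarith [hL z hz, hS z]
  have hgrow := abs_eval_le_of_abs_eval_le_on_cap hd hk hP hε
    ((div_le_one (by positivity)).2 (hc1.trans hsqrt)) hcap y
  have hscale : (8 * k / (c / √n)) ^ (2 * k) = (8 * k / c) ^ (2 * k) * (n : ℝ) ^ k := by
    rw [div_div_eq_mul_div, mul_div_right_comm, mul_pow, pow_mul (√(n : ℝ)),
      sq_sqrt n.cast_nonneg]
  rw [hscale] at hgrow
  calc |f y - MvPolynomial.eval y.1.ofLp P|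
      ≤ |f y| + |MvPolynomial.eval y.1.ofLp P| := abs_sub _ _
    _ ≤ (S + L) * n ^ k + (2 * k + 1) * ((S + L) * ((8 * k / c) ^ (2 * k) * n ^ k)) := by
        gcongr
        exact (hS y).trans ((le_add_of_nonneg_right hL0).trans
          (le_mul_of_one_le_right (by positivity) (one_le_pow₀ hn')))
    _ = growthConst k c * (S + L) * n ^ k := by
        unfold growthConst
        ring

lemma abs_sub_eval_mul_abs_locFactor_le_of_le_dist (hd : 0 < d) (hk : 0 < k) (hn : 0 < n)
    (hrk : r ≤ k) (hc : 0 < c) (hc1 : c ≤ 1) (hP : P.totalDegree ≤ k) (hS : ∀ y, |f y| ≤ S)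
    {x : Sph d}
    (hL : ∀ y, dist x y ≤ c / √n → |f y - MvPolynomial.eval y.1.ofLp P| ≤ L)
    {y : Sph d} (hxy : c / √n ≤ dist x y) :
    |f y - MvPolynomial.eval y.1.ofLp P| * |(locFactor d n k).eval (hav x y)| ≤
      growthConst k c * (c ^ (4 * k))⁻¹ * ((S + L) * (n : ℝ) ^ (-r) *
        kernelWeight d n k (hav x y)) := by
  have hM := growthConst_nonneg k hc.le
  have hS0 : 0 ≤ S := (abs_nonneg _).trans (hS x)
  have hL0 : 0 ≤ L := (abs_nonneg _).trans (hL x (by rw [dist_self]; positivity))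
  calc |f y - MvPolynomial.eval y.1.ofLp P| * |(locFactor d n k).eval (hav x y)|
      ≤ growthConst k c * (S + L) * n ^ k * |(locFactor d n k).eval (hav x y)| := by
        gcongr
        exact abs_sub_eval_le_growthConst_mul hd hk hn hc hc1 hP hS hL y
    _ ≤ growthConst k c * (S + L) *
          ((c ^ (4 * k))⁻¹ * (n : ℝ) ^ (-r) * kernelWeight d n k (hav x y)) := by
        rw [mul_assoc _ ((n : ℝ) ^ k)]
        exact mul_le_mul_of_nonneg_left (pow_mul_abs_locFactor_le_of_le_dist hn hc hrk hxy)
          (by positivity)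
    _ = growthConst k c * (c ^ (4 * k))⁻¹ * ((S + L) * (n : ℝ) ^ (-r) *
          kernelWeight d n k (hav x y)) := by ring

lemma abs_sub_eval_mul_abs_locFactor_le (hd : 0 < d) (hk : 0 < k) (hkn : 4 * k ≤ n) (hr : 0 ≤ r)
    (hrk : r ≤ k) (hc : 0 < c) (hc1 : c ≤ 1) (hδ : c / √n ≤ δ) (hP : P.totalDegree ≤ k)
    (hS : ∀ y, |f y| ≤ S) (hL0 : 0 ≤ L) {x : Sph d}
    (hL : ∀ y, dist x y ≤ δ → |f y - MvPolynomial.eval y.1.ofLp P| ≤ L * dist x y ^ r)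
    (y : Sph d) :
    |f y - MvPolynomial.eval y.1.ofLp P| * |(locFactor d n k).eval (hav x y)| ≤
      errorConst k c * ((S + L) * (n : ℝ) ^ (-r) * kernelWeight d n k (hav x y)) := by
  have hn : 0 < n := by lia
  have hS0 : 0 ≤ S := (abs_nonneg _).trans (hS x)
  have hM := growthConst_nonneg k hc.le
  have hW0 : 0 ≤ kernelWeight d n k (hav x y) :=
    (farWeight_nonneg d n k (hav_nonneg x y)).trans (farWeight_le_kernelWeight d n k x y)
  have hradius : c / √n ≤ 1 :=
    div_le_one_of_le₀ (hc1.trans (one_le_sqrt.2 (Nat.one_le_cast.2 hn))) (sqrt_nonneg _)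
  rcases le_total (dist x y) (c / √n) with hxy | hxy
  · calc |f y - MvPolynomial.eval y.1.ofLp P| * |(locFactor d n k).eval (hav x y)|
        ≤ L * (dist x y ^ r * |(locFactor d n k).eval (hav x y)|) := by
          rw [← mul_assoc]
          gcongr
          exact hL y (hxy.trans hδ)
      _ ≤ (S + L) * (nearScale ^ (4 * k) * (n : ℝ) ^ (-r) * kernelWeight d n k (hav x y)) :=
          mul_le_mul (le_add_of_nonneg_left hS0)
            (dist_rpow_mul_abs_locFactor_le hd hn hkn hr hrk x y) (by positivity) (by positivity)
      _ = nearScale ^ (4 * k) * ((S + L) * (n : ℝ) ^ (-r) * kernelWeight d n k (hav x y)) := by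
          ring
      _ ≤ errorConst k c * ((S + L) * (n : ℝ) ^ (-r) * kernelWeight d n k (hav x y)) := by
          gcongr
          exact le_add_of_nonneg_right (by positivity)
  · have hcap (z : Sph d) (hz : dist x z ≤ c / √n) :
        |f z - MvPolynomial.eval z.1.ofLp P| ≤ L :=
      (hL z (hz.trans hδ)).trans
        (mul_le_of_le_one_right hL0 (rpow_le_one dist_nonneg (hz.trans hradius) hr))
    refine (abs_sub_eval_mul_abs_locFactor_le_of_le_dist hd hk hn hrk hc hc1 hP hS hcap
      hxy).trans ?_
    gcongr
    exact le_add_of_nonneg_left (by positivity)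

/-- The approximation process associated with `zonalKernel`: it maps `f` to a polynomial that is
close to `f` as soon as `f` is locally close to polynomials of degree at most `k`. -/
def zonalApprox (d n k : ℕ) (f : Sph d → ℝ) (x : Sph d) : ℝ :=
  (∫ y, f y * (zonalKernel d n k).eval (hav x y) ∂sphMeasure d) / kernelMass d n k

lemma isSphPoly_zonalApprox (hf : Continuous f) (hkn : k < 4 * n) :
    IsSphPoly d (2 * (d + 2) * n : ℕ) (zonalApprox d n k f) := by
  obtain ⟨Q, hQdeg, hQ⟩ := exists_eval_eq_integral_mul_eval_hav hf (zonalKernel d n k)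
  refine ⟨MvPolynomial.C (kernelMass d n k)⁻¹ * Q, ?_, fun y => ?_⟩
  · have hdeg := MvPolynomial.totalDegree_mul (MvPolynomial.C (kernelMass d n k)⁻¹) Q
    rw [MvPolynomial.totalDegree_C, zero_add] at hdeg
    refine Nat.cast_lt.2 (((hdeg.trans hQdeg).trans (natDegree_zonalKernel_le d n k)).trans_lt ?_)
    linarith
  · rw [map_mul, MvPolynomial.eval_C, hQ y, zonalApprox, div_eq_inv_mul]

lemma abs_sub_zonalApprox_le_of_error_le (hd : 0 < d) (hn : 0 < n) (hk : k ≤ d * n)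
    (hf : Continuous f) (hP : P.totalDegree ≤ k) {x : Sph d}
    (hx : MvPolynomial.eval x.1.ofLp P = f x) {D : ℝ} (hD : 0 ≤ D)
    (hPD : ∀ y, |f y - MvPolynomial.eval y.1.ofLp P| * |(locFactor d n k).eval (hav x y)| ≤
      D * kernelWeight d n k (hav x y)) :
    |f x - zonalApprox d n k f x| ≤ D * (3 / 2 + farConst k) := by
  have hI := kernelMass_pos hd n k
  have hK := continuous_eval_hav (zonalKernel d n k) x
  have hfK : Integrable (fun y => f y * (zonalKernel d n k).eval (hav x y)) (sphMeasure d) :=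
    integrable_of_continuous_sph (hf.mul hK)
  have hPK : Integrable (fun y : Sph d => MvPolynomial.eval y.1.ofLp P *
      (zonalKernel d n k).eval (hav x y)) (sphMeasure d) :=
    integrable_of_continuous_sph ((continuous_eval_sph P).mul hK)
  have hdiff : Continuous fun y : Sph d => f y - MvPolynomial.eval y.1.ofLp P :=
    hf.sub (continuous_eval_sph P)
  have herror : ∫ y, (f y - MvPolynomial.eval y.1.ofLp P) * (zonalKernel d n k).eval (hav x y)
      ∂sphMeasure d = (zonalApprox d n k f x - f x) * kernelMass d n k := by
    simp_rw [sub_mul]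
    rw [integral_sub hfK hPK, integral_eval_mul_zonalKernel hd n hP, hx, zonalApprox,
      div_mul_cancel₀ _ hI.ne']
  have hbound := abs_integral_mul_zonalKernel_le hd hn hk x hdiff hD hPD
  rw [herror, abs_mul, abs_of_pos hI, ← mul_assoc] at hbound
  rw [abs_sub_comm]
  exact le_of_mul_le_mul_right hbound hI

/-- The local smoothness condition of order `r` at scale `δ`: on each cap `B(x, δ)` some
polynomial of degree less than `r` approximates `f` at `y` to within `L * |x - y| ^ r`. The least
such `L` is the seminorm part of `‖f‖_{d;r}`. -/
def HasLocalApprox (d : ℕ) (r δ L : ℝ) (f : Sph d → ℝ) : Prop :=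
  ∀ x : Sph d, ∃ P, IsSphPoly d r P ∧
    ∀ y ∈ Metric.closedBall x δ, |f y - P y| ≤ L * dist x y ^ r

lemma HasLocalApprox.exists_mvPolynomial (hf : HasLocalApprox d r δ L f) (x : Sph d) :
    ∃ P : MvPolynomial (Fin (d + 1)) ℝ, P.totalDegree ≤ ⌈r⌉₊ ∧
      ∀ y, dist x y ≤ δ → |f y - MvPolynomial.eval y.1.ofLp P| ≤ L * dist x y ^ r := by
  obtain ⟨_, ⟨P, hdeg, hP⟩, hfP⟩ := hf x
  refine ⟨P, Nat.cast_le.1 (hdeg.le.trans (Nat.le_ceil r)), fun y hy => ?_⟩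
  rw [dist_comm] at hy
  simpa only [hP] using hfP y hy

theorem HasLocalApprox.abs_sub_zonalApprox_le (hfL : HasLocalApprox d r δ L f) (hf : Continuous f)
    (hS : ∀ y, |f y| ≤ S) (hL : 0 ≤ L) (hd : 0 < d) (hr : 0 < r) (hrn : 4 * ⌈r⌉₊ ≤ n)
    (hc : 0 < c) (hc1 : c ≤ 1) (hδ : c / √n ≤ δ) (x : Sph d) :
    |f x - zonalApprox d n ⌈r⌉₊ f x| ≤
      errorConst ⌈r⌉₊ c * (3 / 2 + farConst ⌈r⌉₊) * (n : ℝ) ^ (-r) * (S + L) := by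
  have hk : 0 < ⌈r⌉₊ := Nat.ceil_pos.2 hr
  have hn : 0 < n := by lia
  have hS0 : 0 ≤ S := (abs_nonneg _).trans (hS x)
  have hδ0 : 0 ≤ δ := (by positivity : 0 ≤ c / √n).trans hδ
  have hE := errorConst_nonneg ⌈r⌉₊ hc.le
  obtain ⟨P, hdeg, hP⟩ := hfL.exists_mvPolynomial x
  have hx : MvPolynomial.eval x.1.ofLp P = f x := by
    have := hP x (by rwa [dist_self])
    rw [dist_self, zero_rpow hr.ne', mul_zero, abs_nonpos_iff, sub_eq_zero] at this
    exact this.symm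
  refine (abs_sub_zonalApprox_le_of_error_le hd hn (by nlinarith) hf hdeg hx
    (D := errorConst ⌈r⌉₊ c * ((S + L) * (n : ℝ) ^ (-r))) (by positivity) fun y => ?_).trans_eq
    (by ring)
  rw [mul_assoc]
  exact abs_sub_eval_mul_abs_locFactor_le hd hk hrn hr.le (Nat.le_ceil r) hc hc1 hδ hdeg hS hL hP y

end ApproximationProcess

section DimensionBound

lemma dimPi_succ_succ (d m : ℕ) :
    dimPi (d + 1) (m + 1) = (m + d + 1).choose (d + 1) + (m + d).choose (d + 1) := by
  have hlow : ((m + d).choose (d + 1) : ℝ) * (d + 1) = (m + d).choose d * m := by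
    have := Nat.choose_succ_right_eq (m + d) d
    rw [Nat.add_sub_cancel] at this
    exact_mod_cast this
  have hpascal : ((m + d + 1).choose (d + 1) : ℝ) = (m + d).choose d + (m + d).choose (d + 1) := by
    exact_mod_cast Nat.choose_succ_succ (m + d) d
  have hchoose : ((m + d).choose d : ℝ) * (d.factorial * m.factorial) = (m + d).factorial := by
    rw [add_comm m d, Nat.cast_add_choose]
    field_simp
  rw [dimPi, Gamma_nat_eq_factorial (d + 1), Nat.factorial_succ,
    show ((m + 1 : ℕ) : ℝ) + (d + 1 : ℕ) - 1 = (m + d : ℕ) + 1 by push_cast; ring,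
    Gamma_nat_eq_factorial (m + d), Nat.cast_add_one m, Gamma_nat_eq_factorial m, hpascal,
    div_eq_iff (by positivity), ← hchoose]
  push_cast
  linear_combination -(2 * (d.factorial : ℝ) * m.factorial) * hlow

lemma dimPi_pos {d N : ℕ} (hd : 0 < d) (hN : 0 < N) : 0 < dimPi d N := by
  obtain ⟨d, rfl⟩ := Nat.exists_eq_add_one.2 hd
  obtain ⟨m, rfl⟩ := Nat.exists_eq_add_one.2 hN
  rw [dimPi_succ_succ]
  have : 0 < (m + d + 1).choose (d + 1) := Nat.choose_pos (by lia)
  positivity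

lemma dimPi_le_pow {d n : ℕ} (hd : 0 < d) (hn : 0 < n) :
    dimPi d (2 * (d + 2) * n) ≤ (42 * n : ℝ) ^ d := by
  obtain ⟨m, hm⟩ : ∃ m, 2 * (d + 2) * n = m + 1 := Nat.exists_eq_add_one.2 (by positivity)
  have hmd : ((m + d : ℕ) : ℝ) ≤ 7 * d * n := by
    have : m + d ≤ 7 * d * n := by nlinarith
    exact_mod_cast this
  have hchoose : (m + d - 1).choose d ≤ (m + d).choose d := Nat.choose_le_choose d (Nat.sub_le _ _)
  have hd' : (0 : ℝ) < d := Nat.cast_pos.2 hd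
  calc dimPi d (2 * (d + 2) * n) = (m + d).choose d + (m + d - 1).choose d := by
        obtain ⟨e, rfl⟩ := Nat.exists_eq_add_one.2 hd
        rw [hm, dimPi_succ_succ, ← add_assoc, Nat.add_sub_cancel]
    _ ≤ 2 * (m + d).choose d := by
        rw [two_mul]
        gcongr
    _ ≤ 2 ^ d * (exp 1 * (m + d : ℕ) / d) ^ d := by
        gcongr
        · exact le_self_pow₀ one_le_two hd.ne'
        · exact choose_le_exp_mul_div_pow _ _
    _ ≤ 2 ^ d * (3 * (7 * d * n) / d) ^ d := by
        gcongr
        exact exp_one_lt_three.le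
    _ = (42 * n : ℝ) ^ d := by
        rw [← mul_pow]
        congr 1
        field_simp
        norm_num

lemma rpow_neg_le_dimPi_rpow {d n : ℕ} (hd : 0 < d) (hn : 0 < n) {r : ℝ} (hr : 0 ≤ r) :
    (n : ℝ) ^ (-r) ≤ 42 ^ r * dimPi d (2 * (d + 2) * n) ^ (-(r / d)) := by
  have hpow : ((42 * n : ℝ) ^ d) ^ (-(r / d)) ≤ dimPi d (2 * (d + 2) * n) ^ (-(r / d)) :=
    rpow_le_rpow_of_nonpos (dimPi_pos hd (by positivity)) (dimPi_le_pow hd hn)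
      (neg_nonpos.2 (by positivity))
  rw [← rpow_natCast_mul (by positivity), mul_neg, mul_div_cancel₀ _ (by positivity),
    mul_rpow (by norm_num) n.cast_nonneg] at hpow
  calc (n : ℝ) ^ (-r) = 42 ^ r * (42 ^ (-r) * (n : ℝ) ^ (-r)) := by
        rw [← mul_assoc, ← rpow_add (by norm_num), add_neg_cancel, rpow_zero, one_mul]
    _ ≤ 42 ^ r * dimPi d (2 * (d + 2) * n) ^ (-(r / d)) := by gcongr

end DimensionBound

section BestApproximation

variable {d n : ℕ} {f : Sph d → ℝ}

lemma nonempty_sph (d : ℕ) : Nonempty (Sph d) :=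
  ((NormedSpace.sphere_nonempty (E := EuclideanSpace ℝ (Fin (d + 1)))).2 zero_le_one).to_subtype

lemma abs_le_supNorm (hf : Continuous f) (y : Sph d) : |f y| ≤ supNorm f :=
  le_csSup (isCompact_range hf.abs).bddAbove ⟨y, rfl⟩

lemma supNorm_nonneg {X : Type*} (f : X → ℝ) : 0 ≤ supNorm f :=
  sSup_nonneg (by rintro _ ⟨x, rfl⟩; exact abs_nonneg _)

lemma bestApprox_le_of_forall_abs_sub_le {N t : ℝ} {g : Sph d → ℝ} (hg : IsSphPoly d N g)
    (hfg : ∀ y, |f y - g y| ≤ t) : bestApprox d N f ≤ t := by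
  obtain ⟨y⟩ := nonempty_sph d
  exact csInf_le ⟨0, fun _ ⟨_, _, h⟩ => (abs_nonneg _).trans (h y)⟩ ⟨g, hg, hfg⟩

lemma bestApprox_le_supNorm {N : ℝ} (hN : 0 < N) (hf : Continuous f) :
    bestApprox d N f ≤ supNorm f :=
  bestApprox_le_of_forall_abs_sub_le ⟨0, by simpa using hN, fun _ => (map_zero _).symm⟩
    fun y => by simpa using abs_le_supNorm hf y

/-- The constant in the bound for `E_{d;2(d+2)n}(f)` in terms of `n ^ (-r)`; the first term
accounts for the finitely many `n < 4 * ⌈r⌉₊`. -/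
def approxConst (r c : ℝ) : ℝ :=
  (4 * ⌈r⌉₊ : ℝ) ^ r + errorConst ⌈r⌉₊ c * (3 / 2 + farConst ⌈r⌉₊)

lemma approxConst_pos {r c : ℝ} (hr : 0 < r) (hc : 0 ≤ c) : 0 < approxConst r c := by
  have := Nat.ceil_pos.2 hr
  have := errorConst_nonneg ⌈r⌉₊ hc
  unfold approxConst farConst
  positivity

theorem HasLocalApprox.bestApprox_le {r δ L c : ℝ} (hfL : HasLocalApprox d r δ L f)
    (hf : Continuous f) (hL : 0 ≤ L) (hd : 0 < d) (hn : 0 < n) (hr : 0 < r) (hc : 0 < c)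
    (hc1 : c ≤ 1) (hδ : c / √n ≤ δ) :
    bestApprox d (2 * (d + 2) * n : ℕ) f ≤
      approxConst r c * (n : ℝ) ^ (-r) * (supNorm f + L) := by
  have hS := supNorm_nonneg f
  have hE := errorConst_nonneg ⌈r⌉₊ hc.le
  have hC : 0 ≤ errorConst ⌈r⌉₊ c * (3 / 2 + farConst ⌈r⌉₊) := by
    unfold farConst
    positivity
  rcases le_or_gt (4 * ⌈r⌉₊) n with hrn | hrn
  · refine (bestApprox_le_of_forall_abs_sub_le (isSphPoly_zonalApprox hf (by lia))
      (hfL.abs_sub_zonalApprox_le hf (abs_le_supNorm hf) hL hd hr hrn hc hc1 hδ)).trans ?_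
    gcongr
    exact le_add_of_nonneg_left (by positivity)
  · have hone : 1 ≤ (4 * ⌈r⌉₊ : ℝ) ^ r * (n : ℝ) ^ (-r) := by
      rw [rpow_neg n.cast_nonneg, ← div_eq_mul_inv, one_le_div (by positivity)]
      gcongr
      exact_mod_cast hrn.le
    calc bestApprox d (2 * (d + 2) * n : ℕ) f ≤ supNorm f :=
          bestApprox_le_supNorm (by positivity) hf
      _ ≤ 1 * (supNorm f + L) := by linarith
      _ ≤ approxConst r c * (n : ℝ) ^ (-r) * (supNorm f + L) := by
          gcongr
          refine hone.trans ?_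
          gcongr
          exact le_add_of_nonneg_right hC

theorem global_smooth_approx_general :
    ∀ r c : ℝ, 0 < r → 0 < c → ∃ C : ℝ, 0 < C ∧
      ∀ (d : ℕ) (δ : ℝ) (f : Sph d → ℝ) (L : ℝ) (n : ℕ),
        0 < d → 0 < n → Continuous f → 0 ≤ L → HasLocalApprox d r δ L f → c / √n ≤ δ →
        bestApprox d ((2 * (d + 2) * n : ℕ) : ℝ) f ≤
          C * dimPi d (2 * (d + 2) * n) ^ (-(r / (d : ℝ))) * (supNorm f + L) := by
  intro r c hr hc
  have hc' : 0 < min c 1 := lt_min hc one_pos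
  have hpos := approxConst_pos hr hc'.le
  refine ⟨approxConst r (min c 1) * 42 ^ r, by positivity, fun d δ f L n hd hn hf hL hfL hδ => ?_⟩
  have hδ' : min c 1 / √n ≤ δ := (by gcongr; exact min_le_left c 1 : _ ≤ c / √n).trans hδ
  have hS := supNorm_nonneg f
  calc bestApprox d ((2 * (d + 2) * n : ℕ) : ℝ) f
      ≤ approxConst r (min c 1) * (n : ℝ) ^ (-r) * (supNorm f + L) :=
        hfL.bestApprox_le hf hL hd hn hr hc' (min_le_right c 1) hδ'
    _ ≤ approxConst r (min c 1) * (42 ^ r * dimPi d (2 * (d + 2) * n) ^ (-(r / (d : ℝ)))) *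
          (supNorm f + L) := by
        gcongr
        exact rpow_neg_le_dimPi_rpow hd hn hr.le
    _ = _ := by ring

lemma sqrt_div_le_sqrt_mul_log_div {a : ℝ} (ha : 0 ≤ a) (hn : 3 ≤ n) :
    √a / √n ≤ √(a * log n / n) := by
  have hlog : 1 ≤ log n := by
    rw [le_log_iff_exp_le (by positivity)]
    exact exp_one_lt_three.le.trans (by exact_mod_cast hn)
  rw [← sqrt_div ha]
  gcongr
  exact le_mul_of_one_le_right ha hlog

end BestApproximation

/-- Global degree of approximation for functions in the smoothness class `W_{d;r}`
(uniform local polynomial approximation constant `L` on caps of radius `δ`):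
`E_{d;2(d+2)n}(f) ≲ d^{1/6} dim(Π_{2(d+2)n}^d)^{−r/d} ‖f‖_{d;r}`. -/
theorem global_smooth_approx :
    ∀ r : ℝ, 0 < r → ∃ C : ℝ, 0 < C ∧
      ∀ (d : ℕ) (δ : ℝ) (f : Sph d → ℝ) (L : ℝ) (n : ℕ),
        3 ≤ d → 0 < δ → Continuous f → 0 ≤ L →
        (∀ x : Sph d, ∃ P, IsSphPoly d r P ∧
          ∀ y ∈ Metric.closedBall x δ, |f y - P y| ≤ L * dist x y ^ r) →
        2 * (d + 1) ≤ n → ((d : ℝ) + r + 1) ^ 2 ≤ (d : ℝ) * n →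
        Real.sqrt (16 * r * Real.log n / n) ≤ δ →
        bestApprox d ((2 * (d + 2) * n : ℕ) : ℝ) f ≤
          C * (d : ℝ) ^ ((1 : ℝ)/6) * dimPi d (2 * (d + 2) * n) ^ (-(r / (d : ℝ))) *
            (supNorm f + L) := by
  intro r hr
  obtain ⟨C, hC, hbound⟩ := global_smooth_approx_general r √(16 * r) hr (by positivity)
  refine ⟨C, hC, fun d δ f L n hd _ hf hL hfL hn _ hδ => ?_⟩
  have hδ' := (sqrt_div_le_sqrt_mul_log_div (by positivity) (by lia)).trans hδ
  have hd' : (1 : ℝ) ≤ d ^ ((1 : ℝ) / 6) := one_le_rpow (Nat.one_le_cast.2 (by lia)) (by norm_num)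
  have hS := supNorm_nonneg f
  have hn0 : 0 < n := by lia
  have hdim := dimPi_pos (show 0 < d by lia) (show 0 < 2 * (d + 2) * n by positivity)
  refine (hbound d δ f L n (by lia) hn0 hf hL hfL hδ').trans ?_
  gcongr
  exact le_mul_of_one_le_right hC.le hd'

end
end

section
/- Let r ≥ 1 be an integer, let R be a (real) trigonometric polynomial of order at most r, and let 0 < γ < γ₁ ≤ π/2. If max_{t ∈ [−2γ, 2γ]} |R(t)| = 1, then max_{t ∈ [−2γ₁, 2γ₁]} |R(t)| ≤ (2 sin γ₁ / sin γ)^{2r} ≤ (π γ₁ / γ)^{2r}. -/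
noncomputable section

open MeasureTheory Real Set
open scoped RealInnerProductSpace

/-- `R` is a (real) trigonometric polynomial of order at most `r`. -/
def IsTrigPoly (r : ℕ) (R : ℝ → ℝ) : Prop :=
  ∃ a b : ℕ → ℝ, ∀ t : ℝ,
    R t = a 0 + ∑ k ∈ Finset.range r,
      (a (k + 1) * Real.cos ((k + 1) * t) + b (k + 1) * Real.sin ((k + 1) * t))

/-!
For a trigonometric polynomial `R` of order at most `r`, the even function `(R(t)² + R(-t)²) / 2` is
an algebraic polynomial of degree at most `2r` in `cos t`, and it is bounded by `1` on `[-α, α]` as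
soon as `|R|` is. Outside the interval it is therefore dominated by a rescaled Chebyshev polynomial,
so that `R(t)² ≤ 2 T_{2r}(u)` with `u = (1 + cos α - 2 cos t) / (1 - cos α)`. For `α = 2γ` and
`t = 2φ` this `u` equals `2 (sin φ / sin γ)² - 1`, and the factor `2` lost in dropping `R(-t)²` is
recovered in `2 T_n(u) ≤ (2u)ⁿ`.
-/

section

open Polynomial Polynomial.Chebyshev

lemma two_mul_eval_T_le_two_mul_pow {n : ℕ} (hn : n ≠ 0) {x : ℝ} (hx : 1 ≤ x) :
    2 * (T ℝ n).eval x ≤ (2 * x) ^ n := by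
  set θ := arcosh x
  have two_mul_cosh (y : ℝ) : 2 * cosh y = exp y + exp (-y) := by rw [cosh_eq]; ring
  calc 2 * (T ℝ n).eval x = 2 * cosh (n * θ) := by
        rw [← cosh_arcosh hx, T_real_cosh, Int.cast_natCast]
    _ = exp θ ^ n + exp (-θ) ^ n := by
        rw [two_mul_cosh, ← mul_neg, exp_nat_mul, exp_nat_mul]
    _ ≤ (exp θ + exp (-θ)) ^ n := pow_add_pow_le (exp_nonneg _) (exp_nonneg _) hn
    _ = (2 * x) ^ n := by rw [← two_mul_cosh, cosh_arcosh hx]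

lemma eval_le_eval_T_of_forall_mem_uIcc {n : ℕ} {P : ℝ[X]} (hP : P.degree ≤ n) {a b : ℝ}
    (hbound : ∀ y ∈ uIcc a b, |P.eval y| ≤ 1) {u : ℝ} (hu : 1 ≤ u) :
    P.eval ((a + b) / 2 + u * ((b - a) / 2)) ≤ (T ℝ n).eval u := by
  set L : ℝ[X] := C ((a + b) / 2) + X * C ((b - a) / 2)
  have eval_comp_L (v : ℝ) : (P.comp L).eval v = P.eval ((a + b) / 2 + v * ((b - a) / 2)) := by
    simp only [L, eval_comp, eval_add, eval_mul, eval_C, eval_X]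
  have hdeg : (P.comp L).degree ≤ n := by
    have hL : L.natDegree ≤ 1 := by
      dsimp only [L]
      compute_degree
    refine degree_le_of_natDegree_le (natDegree_comp_le.trans ?_)
    simpa only [mul_one] using Nat.mul_le_mul (natDegree_le_of_degree_le hP) hL
  have hcomp : ∀ v ∈ Icc (-1) 1, |(P.comp L).eval v| ≤ 1 := by
    rintro v ⟨hv₁, hv₂⟩
    rw [eval_comp_L]
    refine hbound _ (segment_eq_uIcc a b ▸ ⟨(1 - v) / 2, (1 + v) / 2, ?_, ?_, ?_, ?_⟩)
    · linarith
    · linarith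
    · ring
    · simp only [smul_eq_mul]; ring
  rw [← eval_comp_L]
  exact eval_iterate_derivative_le_of_forall_abs_le_one (k := 0) hu hdeg hcomp

namespace IsTrigPoly

variable {r : ℕ} {R : ℝ → ℝ}

lemma exists_eval_cos_add_eval_cos_mul_sin (hR : IsTrigPoly r R) :
    ∃ p q : ℝ[X], p.degree ≤ r ∧ q.degree < r ∧
      ∀ t, R t = p.eval (cos t) + q.eval (cos t) * sin t := by
  obtain ⟨a, b, hab⟩ := hR
  refine ⟨C (a 0) + ∑ k ∈ Finset.range r, a (k + 1) • T ℝ (k + 1),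
    ∑ k ∈ Finset.range r, b (k + 1) • U ℝ k, ?_, ?_, fun t => ?_⟩
  · rw [← mem_degreeLE]
    refine add_mem (mem_degreeLE.2 (degree_C_le.trans (mod_cast r.zero_le)))
      (sum_mem fun k hk => Submodule.smul_mem _ _ ?_)
    rw [mem_degreeLE, degree_T]
    exact_mod_cast Finset.mem_range.1 hk
  · rw [← mem_degreeLT]
    refine sum_mem fun k hk => Submodule.smul_mem _ _ ?_
    rw [mem_degreeLT, degree_U_natCast]
    exact_mod_cast Finset.mem_range.1 hk
  · simp only [hab, eval_add, eval_finsetSum, eval_smul, smul_eq_mul, eval_C, Finset.sum_mul,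
      mul_assoc, U_real_cos, T_real_cos, add_assoc, ← Finset.sum_add_distrib]
    push_cast
    rfl

lemma exists_eval_cos_eq_mean_sq (hR : IsTrigPoly r R) :
    ∃ P : ℝ[X], P.degree ≤ (2 * r : ℕ) ∧ ∀ t, P.eval (cos t) = (R t ^ 2 + R (-t) ^ 2) / 2 := by
  obtain ⟨p, q, hp, hq, hpq⟩ := hR.exists_eval_cos_add_eval_cos_mul_sin
  refine ⟨p ^ 2 + (1 - X ^ 2) * q ^ 2, ?_, fun t => ?_⟩
  · refine degree_le_of_natDegree_le (natDegree_add_le_of_degree_le ?_ ?_)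
    · exact natDegree_pow_le_of_le 2 (natDegree_le_of_degree_le hp)
    · rcases eq_or_ne q 0 with rfl | hq₀
      · simp
      have hqr : q.natDegree < r := (natDegree_lt_iff_degree_lt hq₀).2 hq
      have hX : (1 - X ^ 2 : ℝ[X]).natDegree ≤ 2 := by compute_degree
      calc ((1 - X ^ 2) * q ^ 2).natDegree ≤ 2 + 2 * q.natDegree :=
            natDegree_mul_le_of_le hX natDegree_pow_le
        _ ≤ 2 * r := by lia
  · simp only [hpq, cos_neg, sin_neg, eval_add, eval_mul, eval_sub, eval_pow, eval_one, eval_X,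
      ← sin_sq]
    ring

lemma sq_le_two_mul_eval_T (hR : IsTrigPoly r R) {α t : ℝ} (hα : 0 ≤ α) (hα₁ : cos α < 1)
    (hbound : ∀ s ∈ Icc (-α) α, |R s| ≤ 1) (ht : cos t ≤ cos α) :
    R t ^ 2 ≤ 2 * (T ℝ (2 * r : ℕ)).eval ((1 + cos α - 2 * cos t) / (1 - cos α)) := by
  obtain ⟨P, hP, hPeval⟩ := hR.exists_eval_cos_eq_mean_sq
  set u := (1 + cos α - 2 * cos t) / (1 - cos α)
  have hden : 0 < 1 - cos α := by linarith
  have hu : 1 ≤ u := by rw [one_le_div hden]; linarith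
  have hcos_t : cos t = (1 + cos α) / 2 + u * ((cos α - 1) / 2) := by
    linear_combination (div_mul_cancel₀ (1 + cos α - 2 * cos t) hden.ne') / 2
  have hPbound : ∀ y ∈ uIcc 1 (cos α), |P.eval y| ≤ 1 := by
    intro y hy
    rw [uIcc_of_ge hα₁.le, ← cos_zero] at hy
    obtain ⟨s, ⟨hs₀, hsα⟩, rfl⟩ := intermediate_value_Icc' hα continuousOn_cos hy
    have hRs := (sq_le_one_iff_abs_le_one _).2 (hbound s ⟨by linarith, hsα⟩)
    have hRs' := (sq_le_one_iff_abs_le_one _).2 (hbound (-s) ⟨by linarith, by linarith⟩)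
    rw [hPeval, abs_of_nonneg (by positivity)]
    linarith
  calc R t ^ 2 ≤ R t ^ 2 + R (-t) ^ 2 := le_add_of_nonneg_right (sq_nonneg _)
    _ = 2 * P.eval (cos t) := by rw [hPeval]; ring
    _ ≤ 2 * (T ℝ (2 * r : ℕ)).eval u := by
        rw [hcos_t]
        gcongr
        exact eval_le_eval_T_of_forall_mem_uIcc hP hPbound hu

lemma abs_apply_two_mul_le_two_mul_sin_div_sin_pow (hR : IsTrigPoly r R) (hr : r ≠ 0) {γ φ : ℝ}
    (hγ : 0 ≤ γ) (hsinγ : 0 < sin γ) (hbound : ∀ t ∈ Icc (-(2 * γ)) (2 * γ), |R t| ≤ 1)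
    (hφ : sin γ ≤ |sin φ|) :
    |R (2 * φ)| ≤ (2 * |sin φ| / sin γ) ^ (2 * r) := by
  have cos_two_mul_eq (x : ℝ) : cos (2 * x) = 1 - 2 * sin x ^ 2 := by
    rw [cos_two_mul', cos_sq']; ring
  have hsq : sin γ ^ 2 ≤ sin φ ^ 2 := by simpa only [sq_abs] using pow_le_pow_left₀ hsinγ.le hφ 2
  have hsinγ_sq : 0 < sin γ ^ 2 := pow_pos hsinγ 2
  have hT := hR.sq_le_two_mul_eval_T (t := 2 * φ) (mul_nonneg two_pos.le hγ)
    (by rw [cos_two_mul_eq]; linarith) hbound (by rw [cos_two_mul_eq, cos_two_mul_eq]; linarith)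
  set u := (1 + cos (2 * γ) - 2 * cos (2 * φ)) / (1 - cos (2 * γ))
  have hu_eq : u = 2 * (sin φ / sin γ) ^ 2 - 1 := by
    simp only [u, cos_two_mul_eq]
    field_simp
    ring
  have hu : 1 ≤ u := by
    have : 1 ≤ (sin φ / sin γ) ^ 2 := by rwa [div_pow, one_le_div hsinγ_sq]
    linarith
  refine abs_le_of_sq_le_sq (hT.trans ?_) (by positivity)
  calc 2 * (T ℝ (2 * r : ℕ)).eval u ≤ (2 * u) ^ (2 * r) :=
        two_mul_eval_T_le_two_mul_pow (by lia) hu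
    _ ≤ ((2 * |sin φ| / sin γ) ^ 2) ^ (2 * r) := by
        gcongr
        rw [hu_eq, mul_div_assoc, mul_pow, div_pow, div_pow, sq_abs]
        linarith
    _ = ((2 * |sin φ| / sin γ) ^ (2 * r)) ^ 2 := pow_right_comm _ _ _

end IsTrigPoly

lemma two_mul_sin_div_sin_le_pi_mul_div {x y : ℝ} (hx : 0 ≤ x) (hy : 0 < y) (hy' : y ≤ π / 2) :
    2 * sin x / sin y ≤ π * x / y :=
  calc 2 * sin x / sin y ≤ 2 * x / (2 / π * y) := by
        gcongr
        · exact sin_le hx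
        · exact mul_le_sin hy.le hy'
    _ = π * x / y := by field_simp

end

/-- Bernstein–Walsh type estimate for trigonometric polynomials: if `max_{[-2γ,2γ]} |R| = 1`
then `max_{[-2γ₁,2γ₁]} |R| ≤ (2 sin γ₁ / sin γ)^{2r} ≤ (π γ₁/γ)^{2r}`. -/
theorem trig_walsh (r : ℕ) (hr : 1 ≤ r) (R : ℝ → ℝ) (hR : IsTrigPoly r R)
    (γ γ₁ : ℝ) (hγ : 0 < γ) (hγγ₁ : γ < γ₁) (hγ₁ : γ₁ ≤ Real.pi / 2)
    (hmax : IsGreatest ((fun t => |R t|) '' Set.Icc (-(2 * γ)) (2 * γ)) 1) :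
    (∀ t ∈ Set.Icc (-(2 * γ₁)) (2 * γ₁),
        |R t| ≤ (2 * Real.sin γ₁ / Real.sin γ) ^ (2 * r)) ∧
      (2 * Real.sin γ₁ / Real.sin γ) ^ (2 * r) ≤ (Real.pi * γ₁ / γ) ^ (2 * r) := by
  have hbound : ∀ t ∈ Icc (-(2 * γ)) (2 * γ), |R t| ≤ 1 := fun t ht => hmax.2 ⟨t, ht, rfl⟩
  have hsinγ : 0 < sin γ := sin_pos_of_pos_of_lt_pi hγ (by linarith)
  have hsin_le : sin γ ≤ sin γ₁ := sin_le_sin_of_le_of_le_pi_div_two (by linarith) hγ₁ hγγ₁.le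
  have hsinγ₁ : 0 ≤ sin γ₁ := hsinγ.le.trans hsin_le
  refine ⟨fun t ht => ?_, ?_⟩
  · obtain ⟨φ, rfl⟩ : ∃ φ, t = 2 * φ := ⟨t / 2, by ring⟩
    have hφ : |φ| ≤ γ₁ := abs_le.2 ⟨by linarith [ht.1], by linarith [ht.2]⟩
    rcases le_total |φ| γ with hφγ | hφγ
    · obtain ⟨hφ₁, hφ₂⟩ := abs_le.1 hφγ
      refine (hbound _ ⟨by linarith, by linarith⟩).trans (one_le_pow₀ ?_)
      rw [one_le_div hsinγ]
      linarith
    · have habs : |sin φ| = sin |φ| := abs_sin_eq_sin_abs_of_abs_le_pi (by linarith)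
      have hlower : sin γ ≤ |sin φ| :=
        habs ▸ sin_le_sin_of_le_of_le_pi_div_two (by linarith) (hφ.trans hγ₁) hφγ
      have hupper : |sin φ| ≤ sin γ₁ :=
        habs ▸ sin_le_sin_of_le_of_le_pi_div_two (by linarith [abs_nonneg φ]) hγ₁ hφ
      grw [hR.abs_apply_two_mul_le_two_mul_sin_div_sin_pow (by lia) hγ.le hsinγ hbound hlower,
        hupper]
  · grw [two_mul_sin_div_sin_le_pi_mul_div (hγ.trans hγγ₁).le hγ (hγγ₁.le.trans hγ₁)]
end
end

section
/- Let d ≥ 1 and r ≥ 1 be integers, P ∈ Π_r^d, x ∈ S^d, and δ ∈ (0,2]. Then sup_{y ∈ S^d} |P(y)| ≤ (4/δ)^{2r} · sup_{y ∈ B(x,δ)} |P(y)|. -/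
noncomputable section

open MeasureTheory Real Set
open scoped RealInnerProductSpace

/-!
Stereographic projection from the antipode `-x` turns caps around `x` into balls around `0`. On each
ray `t ↦ t • w` of the projection plane, a polynomial of degree at most `n` on the sphere becomes a
rational function of `t` with denominator `(‖t • w‖ ^ 2 + 4) ^ n`, so clearing denominators leaves a
univariate polynomial of degree at most `2 * n`, whose growth off the interval corresponding to the
cap is controlled by the extremality of Chebyshev polynomials. Translated back to chordal distances
this gives the factor `(2 * dist y x / δ) ^ (2 * n)`, and `dist y x ≤ 2`. The antipode itself is
reached by continuity.
-/

section PolynomialGrowth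

open Polynomial

theorem eval_chebyshev_T_le_two_mul_pow (n : ℕ) {u : ℝ} (hu : 1 ≤ u) :
    (Chebyshev.T ℝ n).eval u ≤ (2 * u) ^ n := by
  induction n with
  | zero => simp
  | succ n ih =>
    have hprev : 1 ≤ (Chebyshev.T ℝ (n - 1)).eval u := Chebyshev.one_le_eval_T_real _ hu
    calc (Chebyshev.T ℝ (n + 1 : ℕ)).eval u
        = 2 * u * (Chebyshev.T ℝ n).eval u - (Chebyshev.T ℝ (n - 1)).eval u := by
          simp [Chebyshev.T_add_one]
      _ ≤ 2 * u * (Chebyshev.T ℝ n).eval u := by linarith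
      _ ≤ 2 * u * (2 * u) ^ n := by gcongr
      _ = (2 * u) ^ (n + 1) := (pow_succ' _ _).symm

theorem abs_eval_le_of_forall_Icc_abs_le_one {Q : ℝ[X]} {n : ℕ} (hdeg : Q.natDegree ≤ n)
    (hQ : ∀ s ∈ Icc (-1 : ℝ) 1, |Q.eval s| ≤ 1) {u : ℝ} (hu : 1 ≤ u) :
    |Q.eval u| ≤ (2 * u) ^ n := by
  have eval_le {R : ℝ[X]} (hdegR : R.natDegree ≤ n) (hR : ∀ s ∈ Icc (-1 : ℝ) 1, |R.eval s| ≤ 1) :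
      R.eval u ≤ (2 * u) ^ n :=
    (Chebyshev.eval_iterate_derivative_le_of_forall_abs_le_one (k := 0) hu
      (natDegree_le_iff_degree_le.1 hdegR) hR).trans (eval_chebyshev_T_le_two_mul_pow n hu)
  have hneg := eval_le (R := -Q) (by rwa [natDegree_neg]) (by simpa using hQ)
  exact abs_le'.2 ⟨eval_le hdeg hQ, by simpa using hneg⟩

theorem abs_eval_le_of_forall_Icc_abs_le {Q : ℝ[X]} {n : ℕ} (hdeg : Q.natDegree ≤ n) {τ M : ℝ}
    (hτ : 0 < τ) (hQ : ∀ s ∈ Icc (-τ) τ, |Q.eval s| ≤ M) {t : ℝ} (ht : τ ≤ t) :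
    |Q.eval t| ≤ (2 * t / τ) ^ n * M := by
  have hM : 0 ≤ M := (abs_nonneg _).trans (hQ 0 ⟨by linarith, hτ.le⟩)
  rcases hM.eq_or_lt with rfl | hM
  · have hQ0 : Q = 0 := by
      refine eq_zero_of_infinite_isRoot Q ((Icc_infinite (neg_lt_self hτ)).mono fun s hs => ?_)
      exact abs_nonpos_iff.1 (hQ s hs)
    simp [hQ0]
  set R : ℝ[X] := C M⁻¹ * Q.comp (C τ * X)
  have evalR (s : ℝ) : |R.eval s| = |Q.eval (τ * s)| / M := by
    simp [R, abs_mul, abs_of_pos hM, div_eq_inv_mul]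
  have hdegR : R.natDegree ≤ n := by
    refine (natDegree_C_mul_le _ _).trans (natDegree_comp_le.trans ?_)
    exact (Nat.mul_le_mul hdeg ((natDegree_C_mul_le _ _).trans natDegree_X_le)).trans_eq (mul_one n)
  have hR (s : ℝ) (hs : s ∈ Icc (-1 : ℝ) 1) : |R.eval s| ≤ 1 := by
    rw [evalR, div_le_one hM]
    exact hQ _ ⟨by nlinarith [hs.1], by nlinarith [hs.2]⟩
  have hRt := abs_eval_le_of_forall_Icc_abs_le_one hdegR hR ((one_le_div hτ).2 ht)
  rwa [evalR, mul_div_cancel₀ _ hτ.ne', div_le_iff₀ hM, ← mul_div_assoc] at hRt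

end PolynomialGrowth

section ClearDenominators

open Polynomial

theorem exists_polynomial_eval_eq_pow_mul_eval_div {K σ : Type*} [Field K] (p : MvPolynomial σ K)
    {n k : ℕ} (hp : p.totalDegree ≤ n) {D : K[X]} {N : σ → K[X]} (hD : D.natDegree ≤ k)
    (hN : ∀ i, (N i).natDegree ≤ k) :
    ∃ Q : K[X], Q.natDegree ≤ n * k ∧ ∀ t, D.eval t ≠ 0 →
      Q.eval t = D.eval t ^ n * MvPolynomial.eval (fun i => (N i).eval t / D.eval t) p := by
  have degree_le {e : σ →₀ ℕ} (he : e ∈ p.support) : ∑ i ∈ e.support, e i ≤ n :=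
    (MvPolynomial.le_totalDegree he).trans hp
  refine ⟨∑ e ∈ p.support,
    C (p.coeff e) * (D ^ (n - ∑ i ∈ e.support, e i) * ∏ i ∈ e.support, N i ^ e i), ?_, ?_⟩
  · refine natDegree_sum_le_of_forall_le _ _ fun e he => (natDegree_C_mul_le _ _).trans ?_
    have hprod : (∏ i ∈ e.support, N i ^ e i).natDegree ≤ (∑ i ∈ e.support, e i) * k := by
      rw [Finset.sum_mul]
      exact (natDegree_prod_le _ _).trans
        (Finset.sum_le_sum fun i _ => natDegree_pow_le_of_le _ (hN i))
    calc _ ≤ (n - ∑ i ∈ e.support, e i) * k + (∑ i ∈ e.support, e i) * k :=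
          natDegree_mul_le_of_le (natDegree_pow_le_of_le _ hD) hprod
      _ = n * k := by rw [← add_mul, Nat.sub_add_cancel (degree_le he)]
  · intro t ht
    simp only [eval_finsetSum, eval_mul, eval_C, eval_pow, eval_prod, MvPolynomial.eval_eq,
      Finset.mul_sum, div_pow, Finset.prod_div_distrib, Finset.prod_pow_eq_pow_sum]
    refine Finset.sum_congr rfl fun e he => ?_
    rw [pow_sub₀ _ ht (degree_le he)]
    ring

end ClearDenominators

section NormedSpace

variable {E : Type*} [NormedAddCommGroup E] [NormedSpace ℝ E]

theorem neBot_nhdsNE_sphere (hE : 1 < Module.rank ℝ E) (v : Metric.sphere (0 : E) 1) :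
    Filter.NeBot (nhdsWithin v {v}ᶜ) := by
  have : ConnectedSpace (Metric.sphere (0 : E) 1) :=
    isConnected_iff_connectedSpace.1 (isConnected_sphere hE 0 zero_le_one)
  have : Nontrivial (Metric.sphere (0 : E) 1) := ⟨v, -v, ne_neg_of_mem_unit_sphere ℝ v⟩
  infer_instance

/-- The polynomial function `z ↦ p(L z)` on `E` obtained by substituting continuous linear
functionals `L i` for the variables of `p`. With coordinate functionals these are the usual
polynomials; allowing any family `L` avoids choosing a basis of `E`. -/
def polyFun {σ : Type*} (L : σ → StrongDual ℝ E) (p : MvPolynomial σ ℝ) (z : E) : ℝ :=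
  MvPolynomial.eval (fun i => L i z) p

variable {σ : Type*} (L : σ → StrongDual ℝ E) (p : MvPolynomial σ ℝ)

theorem continuous_polyFun : Continuous (polyFun L p) :=
  (MvPolynomial.continuous_eval p).comp (by fun_prop)

theorem bddAbove_range_abs_polyFun_sphere :
    BddAbove (range fun z : Metric.sphere (0 : E) 1 => |polyFun L p z|) := by
  refine ⟨∑ e ∈ p.support, |p.coeff e| * ∏ i ∈ e.support, ‖L i‖ ^ e i, ?_⟩
  rintro _ ⟨z, rfl⟩
  have abs_L_le (i : σ) : |L i z| ≤ ‖L i‖ := by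
    simpa using (L i).le_opNorm z
  simp only [polyFun, MvPolynomial.eval_eq]
  refine (Finset.abs_sum_le_sum_abs _ _).trans (Finset.sum_le_sum fun e _ => ?_)
  rw [abs_mul, Finset.abs_prod]
  gcongr with i
  rw [abs_pow]
  exact pow_le_pow_left₀ (abs_nonneg _) (abs_L_le i) _

end NormedSpace

section Sphere

variable {E : Type*} [NormedAddCommGroup E] [InnerProductSpace ℝ E]

theorem dist_stereoInvFun_neg_sq {v : E} (hv : ‖v‖ = 1) (w : (ℝ ∙ v)ᗮ) :
    dist (stereoInvFun hv w : E) (-v) ^ 2 = 4 * ‖w‖ ^ 2 / (‖w‖ ^ 2 + 4) := by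
  have horth : ⟪(w : E), v⟫ = 0 := Submodule.mem_orthogonal_singleton_iff_inner_left.1 w.2
  have hsub : (stereoInvFun hv w : E) - -v =
      (‖w‖ ^ 2 + 4)⁻¹ • ((4 : ℝ) • (w : E) + (2 * ‖w‖ ^ 2) • v) := by
    rw [stereoInvFun_apply]
    match_scalars <;> field
  rw [dist_eq_norm, hsub, norm_smul, mul_pow, norm_add_sq_real, norm_smul, norm_smul,
    real_inner_smul_left, real_inner_smul_right, horth, hv]
  simp only [norm_inv, Real.norm_eq_abs, mul_pow, inv_pow, sq_abs, Submodule.coe_norm]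
  field

theorem dist_stereoInvFun_neg_lt_two {v : E} (hv : ‖v‖ = 1) (w : (ℝ ∙ v)ᗮ) :
    dist (stereoInvFun hv w : E) (-v) < 2 := by
  refine lt_of_pow_lt_pow_left₀ 2 zero_le_two ?_
  rw [dist_stereoInvFun_neg_sq, div_lt_iff₀ (by positivity)]
  linarith

theorem dist_stereoInvFun_neg_le_iff {v : E} (hv : ‖v‖ = 1) {w : (ℝ ∙ v)ᗮ} {δ : ℝ} (hδ0 : 0 ≤ δ)
    (hδ2 : δ < 2) :
    dist (stereoInvFun hv w : E) (-v) ≤ δ ↔ ‖w‖ ≤ 2 * δ / √(4 - δ ^ 2) := by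
  have hδ4 : 0 < 4 - δ ^ 2 := by nlinarith
  rw [← sq_le_sq₀ dist_nonneg hδ0, ← sq_le_sq₀ (norm_nonneg w) (by positivity),
    dist_stereoInvFun_neg_sq, div_pow, Real.sq_sqrt hδ4.le, div_le_iff₀ (by positivity),
    le_div_iff₀ hδ4]
  constructor <;> intro h <;> linarith

variable {σ : Type*} (L : σ → StrongDual ℝ E) (p : MvPolynomial σ ℝ)

theorem exists_polynomial_eval_eq_polyFun_stereoInvFun {n : ℕ} (hp : p.totalDegree ≤ n) {v : E}
    (hv : ‖v‖ = 1) (w : (ℝ ∙ v)ᗮ) :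
    ∃ Q : Polynomial ℝ, Q.natDegree ≤ n * 2 ∧ ∀ t : ℝ, Q.eval t =
      (‖t • w‖ ^ 2 + 4) ^ n * polyFun L p (stereoInvFun hv (t • w)) := by
  set D : Polynomial ℝ := .C (‖w‖ ^ 2) * .X ^ 2 + .C 4
  set N : σ → Polynomial ℝ := fun i =>
    .C (‖w‖ ^ 2 * L i v) * .X ^ 2 + .C (4 * L i w) * .X + .C (-4 * L i v)
  obtain ⟨Q, hdeg, hQ⟩ := exists_polynomial_eval_eq_pow_mul_eval_div p hp (D := D) (N := N)
    (k := 2) (by simp only [D]; compute_degree) (fun i => Polynomial.natDegree_quadratic_le)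
  refine ⟨Q, hdeg, fun t => ?_⟩
  have evalD : D.eval t = ‖t • w‖ ^ 2 + 4 := by
    simp [D, norm_smul, mul_pow, mul_comm]
  have evalN (i : σ) : (N i).eval t / D.eval t = L i (stereoInvFun hv (t • w)) := by
    simp only [evalD, N, Polynomial.eval_add, Polynomial.eval_mul, Polynomial.eval_pow,
      Polynomial.eval_C, Polynomial.eval_X, stereoInvFun_apply, Submodule.coe_norm,
      Submodule.coe_smul, norm_smul, Real.norm_eq_abs, mul_pow, sq_abs, map_add, map_smul,
      smul_eq_mul]
    field
  rw [hQ t (by rw [evalD]; positivity), evalD]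
  simp only [← evalD, evalN, polyFun]

theorem abs_polyFun_stereoInvFun_le {n : ℕ} (hp : p.totalDegree ≤ n) {v : E} (hv : ‖v‖ = 1)
    {s M : ℝ} (hs : 0 < s)
    (hM : ∀ w : (ℝ ∙ v)ᗮ, ‖w‖ ≤ s → |polyFun L p (stereoInvFun hv w)| ≤ M)
    {w : (ℝ ∙ v)ᗮ} (hw : s ≤ ‖w‖) :
    |polyFun L p (stereoInvFun hv w)| ≤
      (4 * (s ^ 2 + 4) / s ^ 2 * (‖w‖ ^ 2 / (‖w‖ ^ 2 + 4))) ^ n * M := by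
  have hw0 : 0 < ‖w‖ := hs.trans_le hw
  obtain ⟨Q, hdeg, hQ⟩ := exists_polynomial_eval_eq_polyFun_stereoInvFun L p hp hv w
  have abs_evalQ (t : ℝ) : |Q.eval t| =
      (‖t • w‖ ^ 2 + 4) ^ n * |polyFun L p (stereoInvFun hv (t • w))| := by
    rw [hQ, abs_mul, abs_of_nonneg (by positivity)]
  have hsmall (t : ℝ) (ht : t ∈ Icc (-(s / ‖w‖)) (s / ‖w‖)) :
      |Q.eval t| ≤ (s ^ 2 + 4) ^ n * M := by
    have htw : ‖t • w‖ ≤ s := by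
      rw [norm_smul, ← le_div_iff₀ hw0]
      exact abs_le.2 ht
    rw [abs_evalQ]
    gcongr
    exact hM _ htw
  have hgrowth := abs_eval_le_of_forall_Icc_abs_le hdeg (div_pos hs hw0) hsmall
    ((div_le_one hw0).2 hw)
  rw [abs_evalQ, one_smul, mul_comm n 2, pow_mul, ← mul_assoc, ← mul_pow,
    ← le_div_iff₀' (by positivity)] at hgrowth
  refine hgrowth.trans_eq ?_
  rw [mul_div_right_comm, ← div_pow]
  congr 2
  field

theorem abs_polyFun_le_of_ne_antipode {n : ℕ} (hp : p.totalDegree ≤ n)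
    {x y : Metric.sphere (0 : E) 1} (hy : y ≠ -x) {δ M : ℝ} (hδ : 0 < δ)
    (hM : ∀ z ∈ Metric.closedBall x δ, |polyFun L p z| ≤ M) (hxy : δ < dist y x) :
    |polyFun L p y| ≤ (2 * dist y x / δ) ^ (2 * n) * M := by
  have hv : ‖(-x : E)‖ = 1 := by simp
  have dist_eq (w : (ℝ ∙ (-x : E))ᗮ) :
      dist (stereoInvFun hv w) x = dist (stereoInvFun hv w : E) (- -x) := by
    rw [neg_neg, Subtype.dist_eq]
  obtain ⟨w, rfl⟩ : ∃ w, stereoInvFun hv w = y :=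
    ⟨_, stereo_left_inv hv fun h => hy (Subtype.ext h)⟩
  have hδ2 : δ < 2 := hxy.trans (dist_eq w ▸ dist_stereoInvFun_neg_lt_two hv w)
  have hδ4 : 0 < 4 - δ ^ 2 := by nlinarith
  set s : ℝ := 2 * δ / √(4 - δ ^ 2)
  have hs : 0 < s := by positivity
  have hs_sq : s ^ 2 = 4 * δ ^ 2 / (4 - δ ^ 2) := by
    rw [div_pow, Real.sq_sqrt hδ4.le]
    ring
  have mem_cap_iff (w' : (ℝ ∙ (-x : E))ᗮ) : dist (stereoInvFun hv w') x ≤ δ ↔ ‖w'‖ ≤ s :=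
    dist_eq w' ▸ dist_stereoInvFun_neg_le_iff hv hδ.le hδ2
  have hsw : s < ‖w‖ := not_le.1 ((mem_cap_iff w).not.1 hxy.not_ge)
  have ratio_sq : (2 * dist (stereoInvFun hv w) x / δ) ^ 2 =
      4 * (s ^ 2 + 4) / s ^ 2 * (‖w‖ ^ 2 / (‖w‖ ^ 2 + 4)) := by
    rw [hs_sq, div_pow, mul_pow, dist_eq, dist_stereoInvFun_neg_sq]
    field
  rw [pow_mul, ratio_sq]
  exact abs_polyFun_stereoInvFun_le L p hp hv hs
    (fun w' hw' => hM _ ((mem_cap_iff w').2 hw')) hsw.le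

theorem sph_walsh_general (hE : 1 < Module.rank ℝ E) {n : ℕ} (hp : p.totalDegree ≤ n)
    (x : Metric.sphere (0 : E) 1) {δ : ℝ} (hδ0 : 0 < δ) (hδ4 : δ ≤ 4)
    (y : Metric.sphere (0 : E) 1) :
    |polyFun L p y| ≤ (4 / δ) ^ (2 * n) *
      sSup ((fun z : Metric.sphere (0 : E) 1 => |polyFun L p z|) '' Metric.closedBall x δ) := by
  set M := sSup ((fun z : Metric.sphere (0 : E) 1 => |polyFun L p z|) '' Metric.closedBall x δ)
  have hM (z) (hz : z ∈ Metric.closedBall x δ) : |polyFun L p z| ≤ M :=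
    le_csSup ((bddAbove_range_abs_polyFun_sphere L p).mono (image_subset_range _ _)) ⟨z, hz, rfl⟩
  have hM0 : 0 ≤ M := (abs_nonneg _).trans (hM x (Metric.mem_closedBall_self hδ0.le))
  have := neBot_nhdsNE_sphere hE (-x)
  have hclosed : IsClosed {y : Metric.sphere (0 : E) 1 | |polyFun L p y| ≤ (4 / δ) ^ (2 * n) * M} :=
    isClosed_le ((continuous_polyFun L p).comp continuous_subtype_val).abs continuous_const
  refine hclosed.closure_subset_iff.2 (fun y hy => ?_) (dense_compl_singleton (-x) y)
  rcases le_or_gt (dist y x) δ with hyδ | hyδ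
  · exact (hM y hyδ).trans
      (le_mul_of_one_le_left hM0 (one_le_pow₀ ((one_le_div hδ0).2 hδ4)))
  · have hdist : dist y x ≤ 2 := by
      simpa [Subtype.dist_eq, dist_eq_norm, one_add_one_eq_two] using norm_sub_le (y : E) x
    refine (abs_polyFun_le_of_ne_antipode L p hp hy hδ0 hM hyδ).trans ?_
    gcongr
    linarith

end Sphere

/-- Bernstein–Walsh estimate on the sphere: for `P ∈ Π_r^d` and a cap `B(x,δ)`,
`sup_{S^d} |P| ≤ (4/δ)^{2r} sup_{B(x,δ)} |P|`. -/
theorem sph_walsh (d r : ℕ) (hd : 1 ≤ d) (hr : 1 ≤ r) (P : Sph d → ℝ)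
    (hP : IsSphPoly d r P) (x : Sph d) (δ : ℝ) (hδ0 : 0 < δ) (hδ2 : δ ≤ 2) :
    ∀ y : Sph d,
      |P y| ≤ (4 / δ) ^ (2 * r) * sSup ((fun z => |P z|) '' Metric.closedBall x δ) := by
  obtain ⟨p, hp, hPp⟩ := hP
  have hrank : 1 < Module.rank ℝ (EuclideanSpace ℝ (Fin (d + 1))) := by
    rw [rank_eq_card_basis (EuclideanSpace.basisFun _ ℝ).toBasis, Fintype.card_fin]
    exact_mod_cast Nat.lt_succ_of_le hd
  have hP_eq (y : Sph d) : P y = polyFun (fun i => EuclideanSpace.proj i) p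
      (y : EuclideanSpace ℝ (Fin (d + 1))) := hPp y
  simp only [hP_eq]
  exact sph_walsh_general _ p hrank (Nat.cast_le.1 hp.le) x hδ0 (hδ2.trans (by norm_num))

end
end
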